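/- Let f(x) = F₁(x') + ωF₂(x') with f ∈ GS²(Ω_D) ∩ C²(Ω_D, 𝔸). Then for all x ∈ Ω_D: Δ_x f(x) = Δ_{x'}F₁(x') + ω Δ_{x'}F₂(x') + (q−1)((1/r)∂_r F₁(x') + ω ∂_r(F₂(x')/r)), where Δ_{x'} = Δ_{x_p} + ∂_r² is the Laplacian on ℝ^{p+2}, and at points with r = 0 the quantities (1/r)∂_r F₁ and ∂_r(F₂/r) are understood as limits as r → 0, which exist and equal ∂_r²F₁(x_p, 0) and (1/2)∂_r²F₂(x_p, 0) respectively. -/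

import Mathlib

open scoped BigOperators
open Filter Topology

namespace GPSM

variable (A : Type*) [NormedAddCommGroup A] [NormedSpace ℝ A] [Mul A] [One A]

/-- `A` is a real alternative algebra with unit `1`, of finite dimension `d > 1`,
equipped with an anti-involution `conj` (a real-linear map with `(a^c)^c = a`,
`(ab)^c = b^c a^c`, fixing the reals).  The associator is alternating (left/right
alternative laws). -/
structure IsAltStarAlg (conj : A → A) : Prop where
  finDim : FiniteDimensional ℝ A
  one_lt_finrank : 1 < Module.finrank ℝ A
  mul_add' : ∀ a b c : A, a * (b + c) = a * b + a * c
  add_mul' : ∀ a b c : A, (a + b) * c = a * c + b * c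
  smul_mul' : ∀ (r : ℝ) (a b : A), (r • a) * b = r • (a * b)
  mul_smul' : ∀ (r : ℝ) (a b : A), a * (r • b) = r • (a * b)
  one_mul' : ∀ a : A, 1 * a = a
  mul_one' : ∀ a : A, a * 1 = a
  alt_left : ∀ a b : A, a * (a * b) = a * a * b
  alt_right : ∀ a b : A, a * b * b = a * (b * b)
  conj_add : ∀ a b : A, conj (a + b) = conj a + conj b
  conj_smul : ∀ (r : ℝ) (a : A), conj (r • a) = r • conj a
  conj_conj : ∀ a : A, conj (conj a) = a
  conj_mul : ∀ a b : A, conj (a * b) = conj b * conj a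
  conj_one : conj 1 = 1

/-- `v 0, v 1, …, v m` is a hypercomplex basis of the hypercomplex subspace
`M = span(v 0, …, v m)` of `A`: `v 0 = 1`, `t(v s) = 0`, `n(v s) = 1`, the `v s`
anticommute for distinct `s, t ∈ {1,…,m}`, they are linearly independent, and
`M` is contained in the quadratic cone `Q_A`. -/
structure IsHypBasis (conj : A → A) (v : ℕ → A) (m : ℕ) : Prop where
  v_zero : v 0 = 1
  trace_zero : ∀ s, 1 ≤ s → s ≤ m → v s + conj (v s) = 0
  norm_one : ∀ s, 1 ≤ s → s ≤ m → v s * conj (v s) = 1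
  anticomm : ∀ s t, 1 ≤ s → s ≤ m → 1 ≤ t → t ≤ m → s ≠ t → v s * v t = -(v t * v s)
  indep : LinearIndependent ℝ (fun i : Fin (m + 1) => v i)
  mem_cone : ∀ x ∈ Submodule.span ℝ (Set.range fun i : Fin (m + 1) => v (i : ℕ)),
      ∃ tr nr : ℝ, x + conj x = tr • (1 : A) ∧ x * conj x = nr • (1 : A) ∧
        ((∃ r : ℝ, x = r • (1 : A)) ∨ tr ^ 2 < 4 * nr)

variable {A}

/-- Identification of `ℝ^{m+1}` with the hypercomplex subspace `M`:
`(x_0,…,x_m) ↦ Σ x_s • v s`. -/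
def emb (v : ℕ → A) (m : ℕ) (x : Fin (m + 1) → ℝ) : A :=
  ∑ s : Fin (m + 1), x s • v (s : ℕ)

/-- First `p+1` coordinates of a point of `M ≅ ℝ^{m+1}`, i.e. the `x_p`-part. -/
def projP (m p : ℕ) (x : Fin (m + 1) → ℝ) : Fin (p + 1) → ℝ := fun s =>
  if h : (s : ℕ) < m + 1 then x ⟨(s : ℕ), h⟩ else 0

/-- Inclusion `ℝ^{p+1} ⊆ ℝ^{m+1}` (remaining coordinates `0`). -/
def injP (m p : ℕ) (y : Fin (p + 1) → ℝ) : Fin (m + 1) → ℝ := fun s =>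
  if h : (s : ℕ) < p + 1 then y ⟨(s : ℕ), h⟩ else 0

/-- The coordinates of `x_q` (last `q = m - p` coordinates of `x`). -/
def xqpart (m p : ℕ) (x : Fin (m + 1) → ℝ) : Fin (m + 1) → ℝ := fun s =>
  if (s : ℕ) ≤ p then 0 else x s

/-- The coordinates of `x_p` inside `ℝ^{m+1}`. -/
def xppart (m p : ℕ) (x : Fin (m + 1) → ℝ) : Fin (m + 1) → ℝ := fun s =>
  if (s : ℕ) ≤ p then x s else 0

/-- `r = |x_q|`. -/
noncomputable def rad (m p : ℕ) (x : Fin (m + 1) → ℝ) : ℝ :=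
  Real.sqrt (∑ s : Fin (m + 1), (xqpart m p x s) ^ 2)

/-- `ω = x_q / |x_q|` (coordinates), `0` when `x_q = 0`. -/
noncomputable def normq (m p : ℕ) (x : Fin (m + 1) → ℝ) : Fin (m + 1) → ℝ :=
  (rad m p x)⁻¹ • xqpart m p x

/-- The reflection `x = x_p + x_q ↦ x_⋄ = x_p - x_q`. -/
def reflP (m p : ℕ) (x : Fin (m + 1) → ℝ) : Fin (m + 1) → ℝ := fun s =>
  if (s : ℕ) ≤ p then x s else -x s

/-- The sphere `𝕊 = {x_q ∈ span(v_{p+1},…,v_m) : x_q² = -1}`, in coordinates. -/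
def Sph (v : ℕ → A) (m p : ℕ) : Set (Fin (m + 1) → ℝ) :=
  {w | (∀ s : Fin (m + 1), (s : ℕ) ≤ p → w s = 0) ∧ emb v m w * emb v m w = -1}

/-- The point `x_p + r ω` of `M ≅ ℝ^{m+1}`. -/
def pt (m p : ℕ) (w : Fin (m + 1) → ℝ) (y : Fin (p + 1) → ℝ) (r : ℝ) :
    Fin (m + 1) → ℝ :=
  injP m p y + r • w

/-- The slice `Ω_ω ⊆ ℝ^{p+2}` of `Ω` at `ω`. -/
def sliceSet (m p : ℕ) (Ω : Set (Fin (m + 1) → ℝ)) (w : Fin (m + 1) → ℝ) :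
    Set ((Fin (p + 1) → ℝ) × ℝ) := {z | pt m p w z.1 z.2 ∈ Ω}

/-- The restriction `f_ω` of `f` to the slice at `ω`, as a function on `ℝ^{p+2}`. -/
def sliceFun (m p : ℕ) (f : (Fin (m + 1) → ℝ) → A) (w : Fin (m + 1) → ℝ) :
    (Fin (p + 1) → ℝ) × ℝ → A := fun z => f (pt m p w z.1 z.2)

/-- Partial derivative `∂_{x_s}` of a function on `ℝ^{m+1}`. -/
noncomputable def pdF (m : ℕ) (s : Fin (m + 1)) (f : (Fin (m + 1) → ℝ) → A)
    (x : Fin (m + 1) → ℝ) : A := fderiv ℝ f x (Pi.single s 1)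

/-- Partial derivative `∂_{x_s}` of a function on `ℝ^{p+1}`. -/
noncomputable def pdP (p : ℕ) (s : Fin (p + 1)) (g : (Fin (p + 1) → ℝ) → A)
    (y : Fin (p + 1) → ℝ) : A := fderiv ℝ g y (Pi.single s 1)

/-- Partial derivative `∂_{x_s}` of a function on `ℝ^{p+2} = ℝ^{p+1} × ℝ`. -/
noncomputable def pdSx (p : ℕ) (s : Fin (p + 1)) (G : (Fin (p + 1) → ℝ) × ℝ → A)
    (z : (Fin (p + 1) → ℝ) × ℝ) : A := fderiv ℝ G z (Pi.single s 1, 0)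

/-- Partial derivative `∂_r` of a function on `ℝ^{p+2} = ℝ^{p+1} × ℝ`. -/
noncomputable def pdSr (p : ℕ) (G : (Fin (p + 1) → ℝ) × ℝ → A)
    (z : (Fin (p + 1) → ℝ) × ℝ) : A := fderiv ℝ G z (0, 1)

/-- Second partial derivative `∂_r²`. -/
noncomputable def pdSr2 (p : ℕ) (G : (Fin (p + 1) → ℝ) × ℝ → A)
    (z : (Fin (p + 1) → ℝ) × ℝ) : A := pdSr p (pdSr p G) z

/-- The operator `Σ_{lo ≤ s ≤ hi} v_s ∂_{x_s}` on functions on `ℝ^{m+1}`.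
`Dop v m 0 p` is `D_{x_p}`, `Dop v m (p+1) m` is `D_{x_q}`, `Dop v m 0 m` is `D_x`. -/
noncomputable def Dop (v : ℕ → A) (m lo hi : ℕ) (f : (Fin (m + 1) → ℝ) → A)
    (x : Fin (m + 1) → ℝ) : A :=
  ∑ s : Fin (m + 1), if lo ≤ (s : ℕ) ∧ (s : ℕ) ≤ hi then v (s : ℕ) * pdF m s f x else 0

/-- The conjugate operator `∂_{x_0} - Σ_{1 ≤ s ≤ hi} v_s ∂_{x_s}` on functions on
`ℝ^{m+1}`; `Dbarop v m p` is `D̄_{x_p}`, `Dbarop v m m` is `D̄_x`. -/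
noncomputable def Dbarop (v : ℕ → A) (m hi : ℕ) (f : (Fin (m + 1) → ℝ) → A)
    (x : Fin (m + 1) → ℝ) : A :=
  pdF m 0 f x -
    ∑ s : Fin (m + 1), if 1 ≤ (s : ℕ) ∧ (s : ℕ) ≤ hi then v (s : ℕ) * pdF m s f x else 0

/-- The operator `D_{x_p} = Σ_{s=0}^p v_s ∂_{x_s}` on functions on `ℝ^{p+1}`. -/
noncomputable def DopP (v : ℕ → A) (p : ℕ) (g : (Fin (p + 1) → ℝ) → A)
    (y : Fin (p + 1) → ℝ) : A :=
  ∑ s : Fin (p + 1), v (s : ℕ) * pdP p s g y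

/-- The operator `D̄_{x_p} = ∂_{x_0} - Σ_{s=1}^p v_s ∂_{x_s}` on functions on `ℝ^{p+1}`. -/
noncomputable def DbaropP (v : ℕ → A) (p : ℕ) (g : (Fin (p + 1) → ℝ) → A)
    (y : Fin (p + 1) → ℝ) : A :=
  pdP p 0 g y - ∑ s : Fin (p + 1), if 1 ≤ (s : ℕ) then v (s : ℕ) * pdP p s g y else 0

/-- The operator `D_{x_p}` on functions on `ℝ^{p+2} = ℝ^{p+1} × ℝ`. -/
noncomputable def DopSx (v : ℕ → A) (p : ℕ) (G : (Fin (p + 1) → ℝ) × ℝ → A)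
    (z : (Fin (p + 1) → ℝ) × ℝ) : A :=
  ∑ s : Fin (p + 1), v (s : ℕ) * pdSx p s G z

/-- The operator `D̄_{x_p}` on functions on `ℝ^{p+2} = ℝ^{p+1} × ℝ`. -/
noncomputable def DbaropSx (v : ℕ → A) (p : ℕ) (G : (Fin (p + 1) → ℝ) × ℝ → A)
    (z : (Fin (p + 1) → ℝ) × ℝ) : A :=
  pdSx p 0 G z - ∑ s : Fin (p + 1), if 1 ≤ (s : ℕ) then v (s : ℕ) * pdSx p s G z else 0

/-- The Laplacian `Δ_x` on functions on `ℝ^{m+1}`. -/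
noncomputable def lapF (m : ℕ) (f : (Fin (m + 1) → ℝ) → A)
    (x : Fin (m + 1) → ℝ) : A :=
  ∑ s : Fin (m + 1), pdF m s (pdF m s f) x

/-- The Laplacian `Δ_{x_p}` on functions on `ℝ^{p+1}`. -/
noncomputable def lapP (p : ℕ) (g : (Fin (p + 1) → ℝ) → A)
    (y : Fin (p + 1) → ℝ) : A :=
  ∑ s : Fin (p + 1), pdP p s (pdP p s g) y

/-- Iterated Laplacian `Δ_x^k`. -/
noncomputable def lapIterF (m k : ℕ) (f : (Fin (m + 1) → ℝ) → A) :
    (Fin (m + 1) → ℝ) → A :=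
  (fun g => lapF m g)^[k] f

/-- Iterated Laplacian `Δ_{x_p}^k`. -/
noncomputable def lapIterP (p k : ℕ) (g : (Fin (p + 1) → ℝ) → A) :
    (Fin (p + 1) → ℝ) → A :=
  (fun h => lapP p h)^[k] g

/-- The Laplacian `Δ_{x'} = Δ_{x_p} + ∂_r²` on functions on `ℝ^{p+2}`. -/
noncomputable def lapSx (p : ℕ) (G : (Fin (p + 1) → ℝ) × ℝ → A)
    (z : (Fin (p + 1) → ℝ) × ℝ) : A :=
  (∑ s : Fin (p + 1), pdSx p s (pdSx p s G) z) + pdSr2 p G z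

/-- The slice Cauchy-Riemann operator `D_ω = D_{x_p} + ω ∂_r` applied to a function
on `ℝ^{p+2}`, where `ω` is given in coordinates by `w`. -/
noncomputable def DomCR (v : ℕ → A) (m p : ℕ) (w : Fin (m + 1) → ℝ)
    (G : (Fin (p + 1) → ℝ) × ℝ → A) (z : (Fin (p + 1) → ℝ) × ℝ) : A :=
  DopSx v p G z + emb v m w * pdSr p G z

/-- `f` is left generalized partial-slice monogenic (of type `(p, m-p)`) on `Ω`. -/
def GSM (v : ℕ → A) (m p : ℕ) (f : (Fin (m + 1) → ℝ) → A)
    (Ω : Set (Fin (m + 1) → ℝ)) : Prop :=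
  ∀ w ∈ Sph v m p, ContDiffOn ℝ 1 (sliceFun m p f w) (sliceSet m p Ω w) ∧
    ∀ z ∈ sliceSet m p Ω w, DomCR v m p w (sliceFun m p f w) z = 0

/-- `Ω` is partially symmetric with respect to `ℝ^{p+1}`. -/
def PSym (v : ℕ → A) (m p : ℕ) (Ω : Set (Fin (m + 1) → ℝ)) : Prop :=
  ∀ x ∈ Ω, ∀ w ∈ Sph v m p, xppart m p x + rad m p x • w ∈ Ω

/-- `Ω` is a slice domain: a domain meeting `ℝ^{p+1}` all of whose slices are
domains in `ℝ^{p+2}`. -/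
def SliceDomain (v : ℕ → A) (m p : ℕ) (Ω : Set (Fin (m + 1) → ℝ)) : Prop :=
  IsOpen Ω ∧ IsConnected Ω ∧ (∃ x ∈ Ω, xqpart m p x = 0) ∧
    ∀ w ∈ Sph v m p, IsConnected (sliceSet m p Ω w)

/-- The reflection `(x_p, r) ↦ (x_p, -r)` of `ℝ^{p+2}`. -/
def reflD (p : ℕ) (z : (Fin (p + 1) → ℝ) × ℝ) : (Fin (p + 1) → ℝ) × ℝ := (z.1, -z.2)

/-- The p-symmetric completion `Ω_D ⊆ M` of `D ⊆ ℝ^{p+2}`. -/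
def OmegaD (v : ℕ → A) (m p : ℕ) (D : Set ((Fin (p + 1) → ℝ) × ℝ)) :
    Set (Fin (m + 1) → ℝ) :=
  {x | ∃ w ∈ Sph v m p, ∃ z ∈ D, x = pt m p w z.1 z.2}

/-- `(F₁, F₂)` satisfies the even-odd (stem function) conditions on `D`. -/
def IsStem (p : ℕ) (D : Set ((Fin (p + 1) → ℝ) × ℝ))
    (F₁ F₂ : (Fin (p + 1) → ℝ) × ℝ → A) : Prop :=
  ∀ z ∈ D, F₁ (reflD p z) = F₁ z ∧ F₂ (reflD p z) = -F₂ z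

/-- `f` is the generalized partial-slice function induced by the stem `(F₁, F₂)`:
`f(x_p + rω) = F₁(x_p, r) + ω F₂(x_p, r)`. -/
def Induced (v : ℕ → A) (m p : ℕ) (D : Set ((Fin (p + 1) → ℝ) × ℝ))
    (F₁ F₂ : (Fin (p + 1) → ℝ) × ℝ → A) (f : (Fin (m + 1) → ℝ) → A) : Prop :=
  ∀ w ∈ Sph v m p, ∀ z ∈ D, f (pt m p w z.1 z.2) = F₁ z + emb v m w * F₂ z

/-- The generalized Cauchy-Riemann system for the stem `(F₁, F₂)` on `D`. -/
def StemCR (v : ℕ → A) (p : ℕ) (D : Set ((Fin (p + 1) → ℝ) × ℝ))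
    (F₁ F₂ : (Fin (p + 1) → ℝ) × ℝ → A) : Prop :=
  ∀ z ∈ D, DopSx v p F₁ z - pdSr p F₂ z = 0 ∧ DbaropSx v p F₂ z + pdSr p F₁ z = 0

/-- `f` is generalized partial-slice regular on `Ω_D`. -/
def MemGSR (v : ℕ → A) (m p : ℕ) (D : Set ((Fin (p + 1) → ℝ) × ℝ))
    (f : (Fin (m + 1) → ℝ) → A) : Prop :=
  ∃ F₁ F₂ : (Fin (p + 1) → ℝ) × ℝ → A, IsStem p D F₁ F₂ ∧
    ContDiffOn ℝ 1 F₁ D ∧ ContDiffOn ℝ 1 F₂ D ∧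
    Induced v m p D F₁ F₂ f ∧ StemCR v p D F₁ F₂

/-- `f` is a generalized partial-slice function on `Ω`. -/
def MemGS (v : ℕ → A) (m p : ℕ) (Ω : Set (Fin (m + 1) → ℝ))
    (f : (Fin (m + 1) → ℝ) → A) : Prop :=
  ∃ F₁ F₂ : (Fin (p + 1) → ℝ) × ℝ → A,
    (∀ z : (Fin (p + 1) → ℝ) × ℝ, F₁ (reflD p z) = F₁ z ∧ F₂ (reflD p z) = -F₂ z) ∧
    ∀ x ∈ Ω, f x = F₁ (projP m p x, rad m p x) +
      emb v m (normq m p x) * F₂ (projP m p x, rad m p x)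

/-- Non-associative power: `a^n` with products taken from the right. -/
def apow (a : A) (n : ℕ) : A := (fun b => a * b)^[n] 1

/-- Partial even part `PE[f](x) = (f(x) + f(x_⋄))/2`. -/
noncomputable def PE (m p : ℕ) (f : (Fin (m + 1) → ℝ) → A)
    (x : Fin (m + 1) → ℝ) : A := (2 : ℝ)⁻¹ • (f x + f (reflP m p x))

/-- Partial odd part `PO[f](x) = (f(x) - f(x_⋄))/2`. -/
noncomputable def PO (m p : ℕ) (f : (Fin (m + 1) → ℝ) → A)
    (x : Fin (m + 1) → ℝ) : A := (2 : ℝ)⁻¹ • (f x - f (reflP m p x))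

/-- `Ω₀* = {x_p + x_q : x_p ∈ Ω₀, x_q ∈ ℝ^q}`. -/
def Omega0star (m p : ℕ) (Ω₀ : Set (Fin (p + 1) → ℝ)) : Set (Fin (m + 1) → ℝ) :=
  {x | projP m p x ∈ Ω₀}

/-- The spherical derivative `f'_s(x) = (1/2) x_q⁻¹ (f(x) - f(x_⋄))`
(using `x_q⁻¹ = -x_q/|x_q|²`). -/
noncomputable def sder (v : ℕ → A) (m p : ℕ) (f : (Fin (m + 1) → ℝ) → A)
    (x : Fin (m + 1) → ℝ) : A :=
  -(((2 : ℝ) * rad m p x ^ 2)⁻¹) • (emb v m (xqpart m p x) * (f x - f (reflP m p x)))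

/-- The spherical Dirac operator
`Γ f = -(1/2) Σ_{p+1 ≤ i,j ≤ m} v_i (v_j (L_{ij} f))`. -/
noncomputable def sphericalGamma (v : ℕ → A) (m p : ℕ) (f : (Fin (m + 1) → ℝ) → A)
    (x : Fin (m + 1) → ℝ) : A :=
  -((2 : ℝ)⁻¹) • ∑ i : Fin (m + 1), ∑ j : Fin (m + 1),
    if p < (i : ℕ) ∧ p < (j : ℕ) then
      v (i : ℕ) * (v (j : ℕ) * (x i • pdF m j f x - x j • pdF m i f x)) else 0

/-- The slice Cauchy-Riemann operator `D_ω` applied to (the slice restriction of) a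
function `f` on `M`, at the point `x` (with `ω = x_q/|x_q|`). -/
noncomputable def DomCRat (v : ℕ → A) (m p : ℕ) (f : (Fin (m + 1) → ℝ) → A)
    (x : Fin (m + 1) → ℝ) : A :=
  DomCR v m p (normq m p x) (sliceFun m p f (normq m p x)) (projP m p x, rad m p x)

/-- `f` is left monogenic on `Ω`: `f ∈ C¹` and `D_x f = 0`. -/
def Monogenic (v : ℕ → A) (m : ℕ) (f : (Fin (m + 1) → ℝ) → A)
    (Ω : Set (Fin (m + 1) → ℝ)) : Prop :=
  ContDiffOn ℝ 1 f Ω ∧ ∀ x ∈ Ω, Dop v m 0 m f x = 0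

/-- `f` is harmonic on `Ω`: `f ∈ C²` and `Δ_x f = 0`. -/
def Harmonic (m : ℕ) (f : (Fin (m + 1) → ℝ) → A)
    (Ω : Set (Fin (m + 1) → ℝ)) : Prop :=
  ContDiffOn ℝ 2 f Ω ∧ ∀ x ∈ Ω, lapF m f x = 0

/-- A family of functions converges normally (locally a summable uniform bound). -/
def NormallyConvOn {E F : Type*} [TopologicalSpace E] [NormedAddCommGroup F]
    (u : ℕ → E → F) (s : Set E) : Prop :=
  ∀ x ∈ s, ∃ U ∈ nhds x, ∃ c : ℕ → ℝ, Summable c ∧ ∀ k : ℕ, ∀ y ∈ U, ‖u k y‖ ≤ c k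

/-- The generalized partial-slice CK-extension
`CK[f₀](x) = Σ_k (r^{2k}/(2k)!)(-Δ_{x_p})^k f₀(x_p)
  + ω Σ_k (r^{2k+1}/(2k+1)!)(-Δ_{x_p})^k (D_{x_p} f₀)(x_p)`. -/
noncomputable def CKe (v : ℕ → A) (m p : ℕ) (f₀ : (Fin (p + 1) → ℝ) → A)
    (x : Fin (m + 1) → ℝ) : A :=
  (∑' k : ℕ, (((-1 : ℝ) ^ k * rad m p x ^ (2 * k)) / (2 * k).factorial) •
      lapIterP p k f₀ (projP m p x)) +
  emb v m (normq m p x) *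
    ∑' k : ℕ, (((-1 : ℝ) ^ k * rad m p x ^ (2 * k + 1)) / (2 * k + 1).factorial) •
      lapIterP p k (DopP v p f₀) (projP m p x)

/-- The coefficient `Γ(q/2)(-1)^k r^{2k} / (2^{2k} k! Γ(k + q/2))`. -/
noncomputable def hgckC (q k : ℕ) (r : ℝ) : ℝ :=
  (Real.Gamma ((q : ℝ) / 2) * (-1) ^ k * r ^ (2 * k)) /
    (2 ^ (2 * k) * (k.factorial : ℝ) * Real.Gamma ((k : ℝ) + (q : ℝ) / 2))

/-- The coefficient `Γ(q/2)(-1)^k r^{2k} / (2^{2k+1} k! Γ(k + q/2 + 1))`. -/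
noncomputable def gckC' (q k : ℕ) (r : ℝ) : ℝ :=
  (Real.Gamma ((q : ℝ) / 2) * (-1) ^ k * r ^ (2 * k)) /
    (2 ^ (2 * k + 1) * (k.factorial : ℝ) * Real.Gamma ((k : ℝ) + (q : ℝ) / 2 + 1))

/-- The coefficient `Γ(q/2 + 1)(-1)^k r^{2k} / (2^{2k} k! Γ(k + q/2 + 1))`. -/
noncomputable def hgckC' (q k : ℕ) (r : ℝ) : ℝ :=
  (Real.Gamma ((q : ℝ) / 2 + 1) * (-1) ^ k * r ^ (2 * k)) /
    (2 ^ (2 * k) * (k.factorial : ℝ) * Real.Gamma ((k : ℝ) + (q : ℝ) / 2 + 1))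

/-- The monogenic generalized CK-extension `GCK[A₀]`. -/
noncomputable def GCKe (v : ℕ → A) (m p : ℕ) (A₀ : (Fin (p + 1) → ℝ) → A)
    (x : Fin (m + 1) → ℝ) : A :=
  (∑' k : ℕ, hgckC (m - p) k (rad m p x) • lapIterP p k A₀ (projP m p x)) +
  emb v m (xqpart m p x) *
    ∑' k : ℕ, gckC' (m - p) k (rad m p x) • lapIterP p k (DopP v p A₀) (projP m p x)

/-- The harmonic generalized CK-extension `HGCK[A₀, A₁]`. -/
noncomputable def HGCKe (v : ℕ → A) (m p : ℕ) (A₀ A₁ : (Fin (p + 1) → ℝ) → A)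
    (x : Fin (m + 1) → ℝ) : A :=
  (∑' k : ℕ, hgckC (m - p) k (rad m p x) • lapIterP p k A₀ (projP m p x)) +
  emb v m (xqpart m p x) *
    ∑' k : ℕ, hgckC' (m - p) k (rad m p x) • lapIterP p k A₁ (projP m p x)

/-- The operator `(1/r)∂_r`, extended to `r = 0` by its limit `∂_r²` (on even
functions). -/
noncomputable def T1 (p : ℕ) (G : (Fin (p + 1) → ℝ) × ℝ → A) :
    (Fin (p + 1) → ℝ) × ℝ → A := fun z =>
  if z.2 = 0 then pdSr2 p G z else (z.2)⁻¹ • pdSr p G z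

/-- The operator `∂_r ∘ (1/r)`, extended to `r = 0` by its limit `(1/2)∂_r²` (on odd
functions). -/
noncomputable def T2 (p : ℕ) (G : (Fin (p + 1) → ℝ) × ℝ → A) :
    (Fin (p + 1) → ℝ) × ℝ → A := fun z =>
  if z.2 = 0 then (2 : ℝ)⁻¹ • pdSr2 p G z
  else fderiv ℝ (fun t : ℝ => t⁻¹ • G (z.1, t)) z.2 1

/-- `C_q(k) = (q-1)(q-3)⋯(q-2k+1)`, `C_q(0) = 1`. -/
noncomputable def cq (q k : ℕ) : ℝ :=
  ∏ i ∈ Finset.range k, ((q : ℝ) - (2 * (i : ℝ) + 1))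

/-- Double factorial. -/
def dfac : ℕ → ℕ
  | 0 => 1
  | 1 => 1
  | n + 2 => (n + 2) * dfac n

/-- The Fueter-Sce constant `γ_q = (-1)^{(q-1)/2} (q-1)!!/(q-2)!!`. -/
noncomputable def gammaQ (q : ℕ) : ℝ :=
  (-1 : ℝ) ^ ((q - 1) / 2) * (dfac (q - 1) : ℝ) / (dfac (q - 2) : ℝ)

/-! Off the axis `r = 0` write `f = F₁(x_p, r) + x_q H(x_p, r)` with `H = F₂ / r`. A function
of `(x_p, r)` satisfies `Δ_x G(x_p, r) = Δ_{x'} G + (q - 1) r⁻¹ ∂_r G`, and since `x_q` is linear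
in `x`, the product rule gives `Δ_x (x_q H) = x_q (Δ_{x'} H + (q + 1) r⁻¹ ∂_r H)`. The claim then
follows from `Δ_{x'} F₂ = r Δ_{x'} H + 2 ∂_r H`.

The radius is not differentiable on the axis. There the second derivatives are computed along the
coordinate lines, on which `f(x + t v_s) = F₁(x_p, t) + v_s F₂(x_p, t)` for `s > p`, and the oddness
of `F₂` removes the contribution of its second derivative. -/

section OneVariable

variable {E : Type*} [NormedAddCommGroup E] [NormedSpace ℝ E] {φ : ℝ → E}

lemma deriv_zero_of_eventually_even (h : ∀ᶠ t in 𝓝 (0 : ℝ), φ (-t) = φ t) : deriv φ 0 = 0 := by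
  have : IsAddTorsionFree E := .of_isTorsionFree ℝ E
  have hderiv : -deriv φ 0 = deriv φ 0 := by
    simpa only [deriv_comp_neg, neg_zero] using Filter.EventuallyEq.deriv_eq h
  exact self_eq_neg.1 hderiv.symm

lemma iteratedDeriv_two_zero_of_eventually_odd (h : ∀ᶠ t in 𝓝 (0 : ℝ), φ (-t) = -φ t) :
    iteratedDeriv 2 φ 0 = 0 := by
  have : IsAddTorsionFree E := .of_isTorsionFree ℝ E
  have hderiv : iteratedDeriv 2 φ 0 = -iteratedDeriv 2 φ 0 := by
    simpa only [iteratedDeriv_comp_neg, neg_zero, even_two.neg_one_pow, one_smul,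
      iteratedDeriv_fun_neg] using Filter.EventuallyEq.iteratedDeriv_eq 2 h
  exact self_eq_neg.1 hderiv

lemma hasDerivAt_deriv_of_contDiffAt_two {t : ℝ} (hφ : ContDiffAt ℝ 2 φ t) :
    HasDerivAt (deriv φ) (iteratedDeriv 2 φ t) t := by
  have hderiv : ContDiffAt ℝ 1 (deriv φ) t := hφ.derivWithin (by norm_num)
  rw [iteratedDeriv_succ, iteratedDeriv_one]
  exact (hderiv.differentiableAt one_ne_zero).hasDerivAt

lemma tendsto_inv_smul_deriv_of_eventually_even (hφ : ContDiffAt ℝ 2 φ 0)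
    (h : ∀ᶠ t in 𝓝 (0 : ℝ), φ (-t) = φ t) :
    Tendsto (fun t => t⁻¹ • deriv φ t) (𝓝[≠] 0) (𝓝 (iteratedDeriv 2 φ 0)) := by
  simpa [deriv_zero_of_eventually_even h] using
    (hasDerivAt_deriv_of_contDiffAt_two hφ).tendsto_slope_zero

lemma taylor_two_isLittleO_zero (hφ : ContDiffAt ℝ 2 φ 0) :
    (fun t => φ t - φ 0 - t • deriv φ 0 - (t ^ 2 / 2) • iteratedDeriv 2 φ 0) =o[𝓝 0]
      fun t => t ^ 2 := by
  have hderiv : (fun t => deriv φ t - deriv φ 0 - t • iteratedDeriv 2 φ 0) =o[𝓝 0] fun t => t := by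
    simpa only [sub_zero] using (hasDerivAt_deriv_of_contDiffAt_two hφ).isLittleO
  obtain ⟨ε, hε, hball⟩ := Metric.eventually_nhds_iff_ball.1 (hφ.eventually (by simp))
  have hball_nhds : 𝓝[Metric.ball 0 ε] (0 : ℝ) = 𝓝 0 :=
    nhdsWithin_eq_nhds.2 (Metric.ball_mem_nhds 0 hε)
  have hrem : ∀ t ∈ Metric.ball (0 : ℝ) ε,
      HasDerivWithinAt (fun t => φ t - t • deriv φ 0 - (t ^ 2 / 2) • iteratedDeriv 2 φ 0)
        (deriv φ t - deriv φ 0 - t • iteratedDeriv 2 φ 0) (Metric.ball 0 ε) t := fun t ht => by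
    have hlin := (hasDerivAt_id t).smul_const (deriv φ 0)
    have hquad := (((hasDerivAt_id t).pow 2).div_const 2).smul_const (iteratedDeriv 2 φ 0)
    have hφt := ((hball t ht).differentiableAt two_ne_zero).hasDerivAt
    refine ((hφt.sub hlin).sub hquad).hasDerivWithinAt.congr_deriv ?_
    simp
  have := (convex_ball (0 : ℝ) ε).isLittleO_pow_succ_real (n := 1) (Metric.mem_ball_self hε) hrem
    (by simpa [hball_nhds] using hderiv)
  simpa [hball_nhds, sub_right_comm] using this

lemma tendsto_deriv_inv_smul (hφ : ContDiffAt ℝ 2 φ 0) (h0 : φ 0 = 0) :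
    Tendsto (deriv fun t => t⁻¹ • φ t) (𝓝[≠] 0) (𝓝 ((2 : ℝ)⁻¹ • iteratedDeriv 2 φ 0)) := by
  have hslope := (hasDerivAt_deriv_of_contDiffAt_two hφ).tendsto_slope_zero
  have hrem := (taylor_two_isLittleO_zero hφ).tendsto_inv_smul_nhds_zero.mono_left
    (nhdsWithin_le_nhds (s := {0}ᶜ))
  have hlim := (hslope.sub hrem).sub_const ((2 : ℝ)⁻¹ • iteratedDeriv 2 φ 0)
  have hhalf : iteratedDeriv 2 φ 0 - 0 - (2 : ℝ)⁻¹ • iteratedDeriv 2 φ 0 =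
      (2 : ℝ)⁻¹ • iteratedDeriv 2 φ 0 := by module
  rw [hhalf] at hlim
  have hdiff : ∀ᶠ t in 𝓝[≠] (0 : ℝ), DifferentiableAt ℝ φ t :=
    nhdsWithin_le_nhds <| (hφ.eventually (by simp)).mono fun t ht => ht.differentiableAt two_ne_zero
  refine hlim.congr' ?_
  filter_upwards [hdiff, self_mem_nhdsWithin] with t ht (ht0 : t ≠ 0)
  rw [((hasDerivAt_inv ht0).fun_smul ht.hasDerivAt).deriv, h0, zero_add]
  match_scalars <;> field_simp <;> ring

lemma iteratedDeriv_two_id_smul {t : ℝ} (hφ : ContDiffAt ℝ 2 φ t) :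
    iteratedDeriv 2 (fun s => s • φ s) t = t • iteratedDeriv 2 φ t + (2 : ℝ) • deriv φ t := by
  have hleibniz := iteratedDerivWithin_smul (n := 2) (f := fun s : ℝ => s) (Set.mem_univ t)
    uniqueDiffOn_univ contDiffWithinAt_id hφ.contDiffWithinAt
  simpa [Finset.sum_range_succ, iteratedDerivWithin_univ, iteratedDeriv_succ, Pi.smul_def',
    ← Nat.cast_smul_eq_nsmul ℝ] using hleibniz

lemma iteratedDeriv_two_scomp {h : ℝ → ℝ} {t : ℝ} (hφ : ContDiffAt ℝ 2 φ (h t))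
    (hh : ContDiffAt ℝ 2 h t) :
    iteratedDeriv 2 (fun s => φ (h s)) t =
      deriv h t ^ 2 • iteratedDeriv 2 φ (h t) + iteratedDeriv 2 h t • deriv φ (h t) := by
  have hderiv : deriv (fun s => φ (h s)) =ᶠ[𝓝 t] fun s => deriv h s • deriv φ (h s) := by
    filter_upwards [hh.eventually (by simp), hh.continuousAt.eventually (hφ.eventually (by simp))]
      with s hhs hφs
    exact deriv.scomp s (hφs.differentiableAt two_ne_zero) (hhs.differentiableAt two_ne_zero)
  have hcomp : HasDerivAt (fun s => deriv φ (h s)) (deriv h t • iteratedDeriv 2 φ (h t)) t :=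
    (hasDerivAt_deriv_of_contDiffAt_two hφ).scomp t (hh.differentiableAt two_ne_zero).hasDerivAt
  rw [iteratedDeriv_succ, iteratedDeriv_one, hderiv.deriv_eq,
    ((hasDerivAt_deriv_of_contDiffAt_two hh).fun_smul hcomp).deriv, smul_smul, sq]

lemma hasDerivAt_sqrt_quadratic {a b t : ℝ} (h : 0 < a + 2 * b * t + t ^ 2) :
    HasDerivAt (fun s => √(a + 2 * b * s + s ^ 2)) ((b + t) / √(a + 2 * b * t + t ^ 2)) t := by
  have hquad : HasDerivAt (fun s => a + 2 * b * s + s ^ 2) (2 * b + 2 * t) t := by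
    simpa using! (((hasDerivAt_id t).const_mul (2 * b)).const_add a).add ((hasDerivAt_id t).pow 2)
  refine (hquad.sqrt h.ne').congr_deriv ?_
  field_simp

lemma iteratedDeriv_two_sqrt_quadratic {a b : ℝ} (ha : 0 < a) :
    iteratedDeriv 2 (fun t => √(a + 2 * b * t + t ^ 2)) 0 = (√a)⁻¹ - b ^ 2 / √a ^ 3 := by
  have hpos : ∀ᶠ t in 𝓝 (0 : ℝ), 0 < a + 2 * b * t + t ^ 2 :=
    (by fun_prop : ContinuousAt (fun t => a + 2 * b * t + t ^ 2) 0).eventually_const_lt (by simpa)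
  have hderiv : deriv (fun t => √(a + 2 * b * t + t ^ 2)) =ᶠ[𝓝 0]
      fun t => (b + t) / √(a + 2 * b * t + t ^ 2) :=
    hpos.mono fun t ht => (hasDerivAt_sqrt_quadratic ht).deriv
  have hne : √a ≠ 0 := (Real.sqrt_pos.2 ha).ne'
  have hsqrt := hasDerivAt_sqrt_quadratic (a := a) (b := b) (t := 0) (by simpa)
  have hdiv := ((hasDerivAt_id' (0 : ℝ)).const_add b).fun_div hsqrt (by simpa using hne)
  rw [iteratedDeriv_succ, iteratedDeriv_one, hderiv.deriv_eq, hdiv.deriv]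
  simp only [mul_zero, add_zero, ne_eq, OfNat.ofNat_ne_zero, not_false_eq_true, zero_pow]
  field_simp

end OneVariable

section CoordinateLines

variable {V E : Type*} [NormedAddCommGroup V] [NormedSpace ℝ V]
  [NormedAddCommGroup E] [NormedSpace ℝ E] {m p : ℕ}

lemma contDiffAt_comp_add_smul {g : V → E} {x e : V} {n : WithTop ℕ∞} (hg : ContDiffAt ℝ n g x) :
    ContDiffAt ℝ n (fun t : ℝ => g (x + t • e)) 0 :=
  ContDiffAt.comp (g := g) (0 : ℝ) (by simpa using hg)
    (contDiffAt_const.add (contDiffAt_id.smul contDiffAt_const))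

lemma contDiffAt_comp_prodMk {g : V × ℝ → E} {z : V × ℝ} {n : WithTop ℕ∞}
    (hg : ContDiffAt ℝ n g z) : ContDiffAt ℝ n (fun t : ℝ => g (z.1, t)) z.2 :=
  hg.comp z.2 (contDiffAt_const.prodMk contDiffAt_id)

lemma iteratedDeriv_two_comp_add_smul {g : V → E} {x e : V} {t : ℝ}
    (hg : ContDiffAt ℝ 2 g (x + t • e)) :
    iteratedDeriv 2 (fun s : ℝ => g (x + s • e)) t =
      fderiv ℝ (fun y => fderiv ℝ g y e) (x + t • e) e := by
  have hline : ContinuousAt (fun s : ℝ => x + s • e) t := by fun_prop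
  have hderiv : deriv (fun s : ℝ => g (x + s • e)) =ᶠ[𝓝 t] fun s => fderiv ℝ g (x + s • e) e :=
    (hline.eventually (hg.eventually (by simp))).mono fun s hs =>
      (hs.differentiableAt two_ne_zero).deriv_comp_add_smul
  have hfderiv : DifferentiableAt ℝ (fun y => fderiv ℝ g y e) (x + t • e) :=
    ((hg.fderiv_right (m := 1) (by norm_num)).differentiableAt one_ne_zero).clm_apply
      (differentiableAt_const e)
  rw [iteratedDeriv_succ, iteratedDeriv_one, hderiv.deriv_eq, hfderiv.deriv_comp_add_smul]

lemma pdF_eq_deriv {f : (Fin (m + 1) → ℝ) → E} {x : Fin (m + 1) → ℝ} (s : Fin (m + 1))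
    (hf : DifferentiableAt ℝ f x) :
    pdF m s f x = deriv (fun t : ℝ => f (x + t • Pi.single s 1)) 0 := by
  rw [DifferentiableAt.deriv_comp_add_smul (by simpa using hf), zero_smul, add_zero, pdF]

lemma pdF_pdF_eq_iteratedDeriv {f : (Fin (m + 1) → ℝ) → E} {x : Fin (m + 1) → ℝ}
    (s : Fin (m + 1)) (hf : ContDiffAt ℝ 2 f x) :
    pdF m s (pdF m s f) x = iteratedDeriv 2 (fun t : ℝ => f (x + t • Pi.single s 1)) 0 := by
  rw [iteratedDeriv_two_comp_add_smul (by simpa using hf), zero_smul, add_zero, pdF]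
  rfl

lemma pdSx_pdSx_eq_iteratedDeriv {G : (Fin (p + 1) → ℝ) × ℝ → E} {z : (Fin (p + 1) → ℝ) × ℝ}
    (s : Fin (p + 1)) (hG : ContDiffAt ℝ 2 G z) :
    pdSx p s (pdSx p s G) z =
      iteratedDeriv 2 (fun t : ℝ => G (z.1 + t • Pi.single s 1, z.2)) 0 := by
  have hline := iteratedDeriv_two_comp_add_smul (g := G) (x := z) (e := (Pi.single s 1, 0)) (t := 0)
    (by simpa using hG)
  rw [zero_smul, add_zero] at hline
  simpa [Prod.add_def] using! hline.symm

lemma pdSr_eq_deriv {G : (Fin (p + 1) → ℝ) × ℝ → E} {y : Fin (p + 1) → ℝ} {r : ℝ}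
    (hG : DifferentiableAt ℝ G (y, r)) :
    pdSr p G (y, r) = deriv (fun t : ℝ => G (y, t)) r := by
  have hline := DifferentiableAt.deriv_comp_add_smul (f := G) (x := (y, 0)) (y := (0, 1)) (t := r)
    (by simpa using hG)
  simpa using! hline.symm

lemma pdSr2_eq_iteratedDeriv {G : (Fin (p + 1) → ℝ) × ℝ → E} {y : Fin (p + 1) → ℝ} {r : ℝ}
    (hG : ContDiffAt ℝ 2 G (y, r)) :
    pdSr2 p G (y, r) = iteratedDeriv 2 (fun t : ℝ => G (y, t)) r := by
  have hline := iteratedDeriv_two_comp_add_smul (g := G) (x := (y, 0)) (e := (0, 1)) (t := r)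
    (by simpa using hG)
  simpa using! hline.symm

end CoordinateLines

section Laplacian

variable {E E' : Type*} [NormedAddCommGroup E] [NormedSpace ℝ E]
  [NormedAddCommGroup E'] [NormedSpace ℝ E'] {m p : ℕ}

lemma eventuallyEq_fderiv_apply {V : Type*} [NormedAddCommGroup V] [NormedSpace ℝ V] {f g : V → E}
    {x : V} (h : f =ᶠ[𝓝 x] g) (e : V) :
    (fun y => fderiv ℝ f y e) =ᶠ[𝓝 x] fun y => fderiv ℝ g y e :=
  h.fderiv.mono fun _ hy => congrArg (fun L : V →L[ℝ] E => L e) hy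

lemma lapF_congr {f g : (Fin (m + 1) → ℝ) → E} {x : Fin (m + 1) → ℝ} (h : f =ᶠ[𝓝 x] g) :
    lapF m f x = lapF m g x :=
  Finset.sum_congr rfl fun _ _ =>
    (eventuallyEq_fderiv_apply (eventuallyEq_fderiv_apply h _) _).eq_of_nhds

lemma lapSx_congr {F G : (Fin (p + 1) → ℝ) × ℝ → E} {z : (Fin (p + 1) → ℝ) × ℝ}
    (h : F =ᶠ[𝓝 z] G) : lapSx p F z = lapSx p G z :=
  congrArg₂ (· + ·)
    (Finset.sum_congr rfl fun _ _ =>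
      (eventuallyEq_fderiv_apply (eventuallyEq_fderiv_apply h _) _).eq_of_nhds)
    (eventuallyEq_fderiv_apply (eventuallyEq_fderiv_apply h _) _).eq_of_nhds

lemma lapF_add {f g : (Fin (m + 1) → ℝ) → E} {x : Fin (m + 1) → ℝ}
    (hf : ContDiffAt ℝ 2 f x) (hg : ContDiffAt ℝ 2 g x) :
    lapF m (fun y => f y + g y) x = lapF m f x + lapF m g x := by
  simp only [lapF, ← Finset.sum_add_distrib]
  refine Finset.sum_congr rfl fun s _ => ?_
  rw [pdF_pdF_eq_iteratedDeriv s hf, pdF_pdF_eq_iteratedDeriv s hg,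
    pdF_pdF_eq_iteratedDeriv s (hf.add hg)]
  exact iteratedDeriv_fun_add (contDiffAt_comp_add_smul hf) (contDiffAt_comp_add_smul hg)

lemma pdF_clm_apply (L : (Fin (m + 1) → ℝ) →L[ℝ] E →L[ℝ] E') {ψ : (Fin (m + 1) → ℝ) → E}
    {x : Fin (m + 1) → ℝ} (s : Fin (m + 1)) (hψ : DifferentiableAt ℝ ψ x) :
    pdF m s (fun y => L y (ψ y)) x = L (Pi.single s 1) (ψ x) + L x (pdF m s ψ x) := by
  rw [pdF, pdF, fderiv_clm_apply L.differentiableAt hψ]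
  simp [add_comm]

lemma pdF_pdF_clm_apply (L : (Fin (m + 1) → ℝ) →L[ℝ] E →L[ℝ] E') {ψ : (Fin (m + 1) → ℝ) → E}
    {x : Fin (m + 1) → ℝ} (s : Fin (m + 1)) (hψ : ContDiffAt ℝ 2 ψ x) :
    pdF m s (pdF m s fun y => L y (ψ y)) x =
      (2 : ℝ) • L (Pi.single s 1) (pdF m s ψ x) + L x (pdF m s (pdF m s ψ) x) := by
  have hpdF : pdF m s (fun y => L y (ψ y)) =ᶠ[𝓝 x]
      fun y => L (Pi.single s 1) (ψ y) + L y (pdF m s ψ y) :=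
    (hψ.eventually (by simp)).mono fun y hy => pdF_clm_apply L s (hy.differentiableAt two_ne_zero)
  have hψ1 : DifferentiableAt ℝ ψ x := hψ.differentiableAt two_ne_zero
  have hψ2 : DifferentiableAt ℝ (pdF m s ψ) x :=
    ((hψ.fderiv_right (m := 1) (by norm_num)).differentiableAt one_ne_zero).clm_apply
      (differentiableAt_const _)
  have hLψ : HasFDerivAt (fun y => L (Pi.single s 1) (ψ y))
      ((L (Pi.single s 1)).comp (fderiv ℝ ψ x)) x :=
    (L (Pi.single s 1)).hasFDerivAt.comp x hψ1.hasFDerivAt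
  have hsum : pdF m s (fun y => L (Pi.single s 1) (ψ y) + L y (pdF m s ψ y)) x =
      L (Pi.single s 1) (pdF m s ψ x) + pdF m s (fun y => L y (pdF m s ψ y)) x := by
    rw [pdF, fderiv_fun_add hLψ.differentiableAt (L.differentiableAt.clm_apply hψ2), hLψ.fderiv]
    rfl
  rw [pdF, (eventuallyEq_fderiv_apply hpdF _).eq_of_nhds, ← pdF, hsum,
    pdF_clm_apply L s hψ2, two_smul, add_assoc]

lemma lapF_clm_apply (L : (Fin (m + 1) → ℝ) →L[ℝ] E →L[ℝ] E') {ψ : (Fin (m + 1) → ℝ) → E}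
    {x : Fin (m + 1) → ℝ} (hψ : ContDiffAt ℝ 2 ψ x) :
    lapF m (fun y => L y (ψ y)) x =
      L x (lapF m ψ x) + (2 : ℝ) • ∑ s, L (Pi.single s 1) (pdF m s ψ x) := by
  simp only [lapF, pdF_pdF_clm_apply L _ hψ, Finset.sum_add_distrib, map_sum, Finset.smul_sum]
  rw [add_comm]

lemma lapSx_snd_smul {G : (Fin (p + 1) → ℝ) × ℝ → E} {z : (Fin (p + 1) → ℝ) × ℝ}
    (hG : ContDiffAt ℝ 2 G z) :
    lapSx p (fun w => w.2 • G w) z = z.2 • lapSx p G z + (2 : ℝ) • pdSr p G z := by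
  have hsmul : ContDiffAt ℝ 2 (fun w : (Fin (p + 1) → ℝ) × ℝ => w.2 • G w) z :=
    contDiffAt_snd.smul hG
  have hr : pdSr2 p (fun w => w.2 • G w) z = z.2 • pdSr2 p G z + (2 : ℝ) • pdSr p G z := by
    rw [pdSr2_eq_iteratedDeriv hsmul, pdSr2_eq_iteratedDeriv hG,
      pdSr_eq_deriv (hG.differentiableAt two_ne_zero), iteratedDeriv_two_id_smul
        (contDiffAt_comp_prodMk hG)]
  have hx : ∀ s, pdSx p s (pdSx p s fun w => w.2 • G w) z = z.2 • pdSx p s (pdSx p s G) z :=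
    fun s => by
      rw [pdSx_pdSx_eq_iteratedDeriv s hsmul, pdSx_pdSx_eq_iteratedDeriv s hG]
      exact iteratedDeriv_fun_const_smul_field _ _
  simp only [lapSx, hr, hx, Finset.smul_sum, smul_add, add_assoc]

end Laplacian

section SliceCoordinates

variable {m p : ℕ} {x : Fin (m + 1) → ℝ} {s : Fin (m + 1)}

/-- The indices `p + 1, …, m` of the coordinates of `x_q`. -/
def qIndices (m p : ℕ) : Finset (Fin (m + 1)) := {s | p < (s : ℕ)}

lemma mem_qIndices : s ∈ qIndices m p ↔ p < (s : ℕ) := Finset.mem_filter_univ s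

lemma card_qIndices (m p : ℕ) : (qIndices m p).card = m - p := by
  have hcompl : qIndices m p = ({s | (s : ℕ) < p + 1} : Finset (Fin (m + 1)))ᶜ := by
    ext s
    simp [mem_qIndices]
  rw [hcompl, Finset.card_compl, Fin.card_filter_val_lt, Fintype.card_fin]
  omega

lemma sum_univ_eq_sum_castLE_add_sum_qIndices {M : Type*} [AddCommMonoid M] (hp : p ≤ m)
    (g : Fin (m + 1) → M) :
    ∑ s, g s = ∑ s : Fin (p + 1), g (s.castLE (Nat.succ_le_succ hp)) + ∑ s ∈ qIndices m p, g s := by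
  rw [← Finset.sum_compl_add_sum (qIndices m p)]
  congr 1
  refine (Finset.sum_nbij (Fin.castLE (Nat.succ_le_succ hp)) ?_ ?_ ?_ fun _ _ => rfl).symm
  · exact fun s _ => by simpa [mem_qIndices] using Nat.le_of_lt_succ s.2
  · exact (Fin.castLE_injective _).injOn
  · exact fun s hs => ⟨⟨s, Nat.lt_succ_of_le (by simpa [mem_qIndices] using hs)⟩, by simp⟩

lemma xqpart_of_mem (hs : s ∈ qIndices m p) : xqpart m p x s = x s :=
  if_neg (not_le.2 (mem_qIndices.1 hs))

lemma xqpart_of_notMem (hs : s ∉ qIndices m p) : xqpart m p x s = 0 :=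
  if_pos (not_lt.1 (mt mem_qIndices.2 hs))

lemma emb_eq_sum_qIndices {E : Type*} [NormedAddCommGroup E] [NormedSpace ℝ E] {v : ℕ → E}
    {w : Fin (m + 1) → ℝ} (hw : ∀ s ∉ qIndices m p, w s = 0) :
    emb v m w = ∑ s ∈ qIndices m p, w s • v s :=
  (Finset.sum_subset (Finset.subset_univ _) fun s _ hs => by rw [hw s hs, zero_smul]).symm

lemma rad_nonneg (m p : ℕ) (x : Fin (m + 1) → ℝ) : 0 ≤ rad m p x := Real.sqrt_nonneg _

lemma rad_eq_sqrt (m p : ℕ) (x : Fin (m + 1) → ℝ) :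
    rad m p x = √(∑ s ∈ qIndices m p, x s ^ 2) := by
  rw [rad, ← Finset.sum_subset (Finset.subset_univ (qIndices m p))
    fun s _ hs => by rw [xqpart_of_notMem hs, zero_pow two_ne_zero]]
  exact congrArg _ (Finset.sum_congr rfl fun s hs => by rw [xqpart_of_mem hs])

lemma rad_sq (m p : ℕ) (x : Fin (m + 1) → ℝ) : rad m p x ^ 2 = ∑ s ∈ qIndices m p, x s ^ 2 := by
  rw [rad_eq_sqrt, Real.sq_sqrt (by positivity)]

lemma xqpart_eq_zero (h : rad m p x = 0) : xqpart m p x = 0 := by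
  have hsum := rad_sq m p x
  rw [h, zero_pow two_ne_zero, eq_comm, Finset.sum_eq_zero_iff_of_nonneg fun s _ => sq_nonneg _]
    at hsum
  funext s
  by_cases hs : s ∈ qIndices m p
  · simpa [xqpart_of_mem hs] using hsum s hs
  · exact xqpart_of_notMem hs

lemma injP_projP_add_xqpart (x : Fin (m + 1) → ℝ) : injP m p (projP m p x) + xqpart m p x = x := by
  funext s
  by_cases hs : (s : ℕ) ≤ p
  · simp [injP, projP, xqpart, hs, s.is_le.not_gt]
  · simp [injP, xqpart, hs, mt Nat.le_of_lt_succ hs]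

/-- The coordinates `x' = (x_p, r)` of a point `x = x_p + x_q`, where `r = |x_q|`. -/
noncomputable def sliceCoord (m p : ℕ) (x : Fin (m + 1) → ℝ) : (Fin (p + 1) → ℝ) × ℝ :=
  (projP m p x, rad m p x)

lemma continuous_sliceCoord (m p : ℕ) : Continuous (sliceCoord m p) := by
  unfold sliceCoord rad projP xqpart
  refine .prodMk (continuous_pi fun s => ?_) (.sqrt (continuous_finsetSum _ fun s _ => ?_)) <;>
    split_ifs <;> fun_prop

lemma contDiffAt_sliceCoord (h : rad m p x ≠ 0) : ContDiffAt ℝ 2 (sliceCoord m p) x := by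
  have hrad : ∑ s, xqpart m p x s ^ 2 ≠ 0 := fun h0 => h (by rw [rad, h0, Real.sqrt_zero])
  unfold sliceCoord rad projP xqpart
  refine .prodMk (contDiffAt_pi.2 fun s => ?_) (.sqrt (.sum fun s _ => ?_) hrad) <;>
    split_ifs <;> fun_prop

lemma rad_congr {y : Fin (m + 1) → ℝ} (h : ∀ s ∈ qIndices m p, x s = y s) :
    rad m p x = rad m p y := by
  rw [rad_eq_sqrt, rad_eq_sqrt, Finset.sum_congr rfl fun s hs => by rw [h s hs]]

lemma sliceCoord_add_smul_single_castLE (hp : p ≤ m) (x : Fin (m + 1) → ℝ) (s : Fin (p + 1))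
    (t : ℝ) :
    sliceCoord m p (x + t • Pi.single (s.castLE (Nat.succ_le_succ hp)) 1) =
      ((sliceCoord m p x).1 + t • Pi.single s 1, (sliceCoord m p x).2) := by
  refine Prod.ext (funext fun k => ?_) (rad_congr fun k hk => ?_)
  · have hk : (k : ℕ) < m + 1 := by omega
    simp [sliceCoord, projP, hk, Pi.single_apply, Fin.ext_iff]
  · have hne : k ≠ s.castLE (Nat.succ_le_succ hp) := by
      rintro rfl
      exact absurd (mem_qIndices.1 hk) (by simpa using Nat.le_of_lt_succ s.2)
    simp [hne]

lemma projP_add_smul_single (hs : s ∈ qIndices m p) (x : Fin (m + 1) → ℝ) (t : ℝ) :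
    projP m p (x + t • Pi.single s 1) = projP m p x := by
  funext k
  have hk : ∀ h, (⟨k, h⟩ : Fin (m + 1)) ≠ s := by
    rintro h rfl
    exact absurd (mem_qIndices.1 hs) (by simpa using Nat.le_of_lt_succ k.2)
  simp [projP, hk]

lemma rad_add_smul_single (hs : s ∈ qIndices m p) (x : Fin (m + 1) → ℝ) (t : ℝ) :
    rad m p (x + t • Pi.single s 1) = √(rad m p x ^ 2 + 2 * x s * t + t ^ 2) := by
  rw [rad_sq, rad_eq_sqrt, ← Finset.add_sum_erase _ _ hs, ← Finset.add_sum_erase _ _ hs,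
    Finset.sum_congr rfl fun k hk => by rw [Pi.add_apply, Pi.smul_apply,
      Pi.single_eq_of_ne (Finset.ne_of_mem_erase hk), smul_zero, add_zero]]
  simp only [Pi.add_apply, Pi.smul_apply, Pi.single_eq_same, smul_eq_mul]
  ring_nf

lemma contDiffAt_rad (h : rad m p x ≠ 0) : ContDiffAt ℝ 2 (rad m p) x :=
  contDiffAt_snd.comp x (contDiffAt_sliceCoord h)

lemma pdF_rad (hs : s ∈ qIndices m p) (h : rad m p x ≠ 0) :
    pdF m s (rad m p) x = x s / rad m p x := by
  have hsqrt := hasDerivAt_sqrt_quadratic (b := x s) (t := 0) (by simpa using sq_pos_of_ne_zero h)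
  simp only [← rad_add_smul_single hs, zero_smul, add_zero] at hsqrt
  rw [pdF_eq_deriv s ((contDiffAt_rad h).differentiableAt two_ne_zero), hsqrt.deriv]

lemma pdF_pdF_rad (hs : s ∈ qIndices m p) (h : rad m p x ≠ 0) :
    pdF m s (pdF m s (rad m p)) x = (rad m p x)⁻¹ - x s ^ 2 / rad m p x ^ 3 := by
  have hsqrt := iteratedDeriv_two_sqrt_quadratic (b := x s) (sq_pos_of_ne_zero h)
  simp only [← rad_add_smul_single hs, Real.sqrt_sq (rad_nonneg m p x)] at hsqrt
  rw [pdF_pdF_eq_iteratedDeriv s (contDiffAt_rad h), hsqrt]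

end SliceCoordinates

section RadialLaplacian

variable {E : Type*} [NormedAddCommGroup E] [NormedSpace ℝ E] {m p : ℕ}
  {G : (Fin (p + 1) → ℝ) × ℝ → E} {x : Fin (m + 1) → ℝ} {s : Fin (m + 1)}

lemma contDiffAt_comp_sliceCoord (hr : rad m p x ≠ 0) (hG : ContDiffAt ℝ 2 G (sliceCoord m p x)) :
    ContDiffAt ℝ 2 (fun y => G (sliceCoord m p y)) x :=
  hG.comp x (contDiffAt_sliceCoord hr)

lemma pdF_pdF_comp_sliceCoord_castLE (hp : p ≤ m) (s : Fin (p + 1)) (hr : rad m p x ≠ 0)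
    (hG : ContDiffAt ℝ 2 G (sliceCoord m p x)) :
    pdF m (s.castLE (Nat.succ_le_succ hp)) (pdF m (s.castLE (Nat.succ_le_succ hp))
      fun y => G (sliceCoord m p y)) x = pdSx p s (pdSx p s G) (sliceCoord m p x) := by
  simp only [pdF_pdF_eq_iteratedDeriv _ (contDiffAt_comp_sliceCoord hr hG),
    pdSx_pdSx_eq_iteratedDeriv s hG, sliceCoord_add_smul_single_castLE hp]

lemma pdF_comp_sliceCoord (hs : s ∈ qIndices m p) (hr : rad m p x ≠ 0)
    (hG : ContDiffAt ℝ 2 G (sliceCoord m p x)) :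
    pdF m s (fun y => G (sliceCoord m p y)) x =
      (x s / rad m p x) • pdSr p G (sliceCoord m p x) := by
  have hline := (contDiffAt_comp_prodMk hG).differentiableAt two_ne_zero
  have hrad := contDiffAt_comp_add_smul (e := Pi.single s 1) (contDiffAt_rad hr)
  have hcomp := deriv.scomp_of_eq 0 hline (hrad.differentiableAt two_ne_zero)
    (by simp [sliceCoord])
  rw [pdF_eq_deriv s ((contDiffAt_comp_sliceCoord hr hG).differentiableAt two_ne_zero),
    ← pdF_rad hs hr, pdF_eq_deriv s ((contDiffAt_rad hr).differentiableAt two_ne_zero)]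
  simp only [sliceCoord, projP_add_smul_single hs]
  rw [pdSr_eq_deriv (hG.differentiableAt two_ne_zero)]
  simpa [sliceCoord] using! hcomp

lemma pdF_pdF_comp_sliceCoord (hs : s ∈ qIndices m p) (hr : rad m p x ≠ 0)
    (hG : ContDiffAt ℝ 2 G (sliceCoord m p x)) :
    pdF m s (pdF m s fun y => G (sliceCoord m p y)) x =
      (x s / rad m p x) ^ 2 • pdSr2 p G (sliceCoord m p x) +
        ((rad m p x)⁻¹ - x s ^ 2 / rad m p x ^ 3) • pdSr p G (sliceCoord m p x) := by
  have hrad := contDiffAt_comp_add_smul (e := Pi.single s 1) (contDiffAt_rad hr)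
  have hcomp := iteratedDeriv_two_scomp (φ := fun t => G (projP m p x, t))
    (by simpa using! contDiffAt_comp_prodMk hG) hrad
  rw [pdF_pdF_eq_iteratedDeriv s (contDiffAt_comp_sliceCoord hr hG), ← pdF_pdF_rad hs hr,
    ← pdF_rad hs hr, pdF_pdF_eq_iteratedDeriv s (contDiffAt_rad hr),
    pdF_eq_deriv s ((contDiffAt_rad hr).differentiableAt two_ne_zero)]
  simp only [sliceCoord, projP_add_smul_single hs]
  rw [pdSr_eq_deriv (hG.differentiableAt two_ne_zero), pdSr2_eq_iteratedDeriv hG]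
  simpa using hcomp

lemma lapF_comp_sliceCoord (hp : p ≤ m) (hr : rad m p x ≠ 0)
    (hG : ContDiffAt ℝ 2 G (sliceCoord m p x)) :
    lapF m (fun y => G (sliceCoord m p y)) x = lapSx p G (sliceCoord m p x) +
      (((m - p : ℕ) : ℝ) - 1) • (rad m p x)⁻¹ • pdSr p G (sliceCoord m p x) := by
  have hsq : ∑ s ∈ qIndices m p, (x s / rad m p x) ^ 2 = 1 := by
    simp_rw [div_pow, ← Finset.sum_div, ← rad_sq, div_self (pow_ne_zero 2 hr)]
  have hinv : ∑ s ∈ qIndices m p, ((rad m p x)⁻¹ - x s ^ 2 / rad m p x ^ 3) =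
      (((m - p : ℕ) : ℝ) - 1) * (rad m p x)⁻¹ := by
    rw [Finset.sum_sub_distrib, ← Finset.sum_div, ← rad_sq, Finset.sum_const, card_qIndices,
      nsmul_eq_mul]
    field_simp
  rw [lapF, sum_univ_eq_sum_castLE_add_sum_qIndices hp, lapSx, add_assoc,
    Finset.sum_congr rfl fun s hs => pdF_pdF_comp_sliceCoord hs hr hG, Finset.sum_add_distrib,
    ← Finset.sum_smul, ← Finset.sum_smul, hsq, hinv, one_smul, mul_smul]
  simp only [pdF_pdF_comp_sliceCoord_castLE hp _ hr hG]

end RadialLaplacian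

section OffAxis

variable {E E' E'' : Type*} [NormedAddCommGroup E] [NormedSpace ℝ E] [NormedAddCommGroup E']
  [NormedSpace ℝ E'] [NormedAddCommGroup E''] [NormedSpace ℝ E''] {v : ℕ → E} {m p : ℕ}
  {x : Fin (m + 1) → ℝ}

/-- The linear map `x ↦ x_q`, with `x_q` regarded as an element of the algebra. -/
noncomputable def embQ (v : ℕ → E) (m p : ℕ) : (Fin (m + 1) → ℝ) →L[ℝ] E :=
  ∑ s ∈ qIndices m p, (ContinuousLinearMap.proj s).smulRight (v s)

/-- The function `x_p + rω ↦ F₁(x_p, r) + ωF₂(x_p, r)` induced by a stem `(F₁, F₂)`, for any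
bilinear product. Since `normq` is `0` on the axis `r = 0`, so is the second summand, in accordance
with `F₂(x_p, 0) = 0` for odd `F₂`. -/
noncomputable def inducedFun (mul : E →L[ℝ] E' →L[ℝ] E'') (v : ℕ → E) (m p : ℕ)
    (F₁ : (Fin (p + 1) → ℝ) × ℝ → E'') (F₂ : (Fin (p + 1) → ℝ) × ℝ → E')
    (x : Fin (m + 1) → ℝ) : E'' :=
  F₁ (sliceCoord m p x) + mul (emb v m (normq m p x)) (F₂ (sliceCoord m p x))

lemma embQ_apply (x : Fin (m + 1) → ℝ) : embQ v m p x = ∑ s ∈ qIndices m p, x s • v s := by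
  simp [embQ]

lemma embQ_single_of_mem {s : Fin (m + 1)} (hs : s ∈ qIndices m p) :
    embQ v m p (Pi.single s 1) = v s := by
  simp [embQ_apply, Pi.single_apply, hs]

lemma embQ_single_of_notMem {s : Fin (m + 1)} (hs : s ∉ qIndices m p) :
    embQ v m p (Pi.single s 1) = 0 := by
  simp [embQ_apply, Pi.single_apply, hs]

lemma emb_normq (v : ℕ → E) (m p : ℕ) (x : Fin (m + 1) → ℝ) :
    emb v m (normq m p x) = (rad m p x)⁻¹ • embQ v m p x := by
  rw [emb_eq_sum_qIndices (p := p) fun s hs => by simp [normq, xqpart_of_notMem hs], embQ_apply,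
    Finset.smul_sum]
  exact Finset.sum_congr rfl fun s hs => by simp [normq, xqpart_of_mem hs, mul_smul]

lemma sum_embQ_single_pdF_comp_sliceCoord (mul : E →L[ℝ] E' →L[ℝ] E'') (hr : rad m p x ≠ 0)
    {H : (Fin (p + 1) → ℝ) × ℝ → E'} (hH : ContDiffAt ℝ 2 H (sliceCoord m p x)) :
    ∑ s, mul (embQ v m p (Pi.single s 1)) (pdF m s (fun y => H (sliceCoord m p y)) x) =
      mul (embQ v m p x) ((rad m p x)⁻¹ • pdSr p H (sliceCoord m p x)) := by
  rw [← Finset.sum_subset (Finset.subset_univ (qIndices m p)) fun s _ hs => by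
    rw [embQ_single_of_notMem hs, map_zero, zero_apply], embQ_apply, map_sum, sum_apply]
  refine Finset.sum_congr rfl fun s hs => ?_
  rw [embQ_single_of_mem hs, pdF_comp_sliceCoord hs hr hH, div_eq_mul_inv, mul_smul,
    map_smul _ (x s), map_smul _ (x s), smul_apply]

lemma lapF_embQ_mul_comp_sliceCoord (hp : p ≤ m) (mul : E →L[ℝ] E' →L[ℝ] E'')
    (hr : rad m p x ≠ 0) {H : (Fin (p + 1) → ℝ) × ℝ → E'}
    (hH : ContDiffAt ℝ 2 H (sliceCoord m p x)) :
    lapF m (fun y => mul (embQ v m p y) (H (sliceCoord m p y))) x =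
      mul (embQ v m p x) (lapSx p H (sliceCoord m p x) +
        (((m - p : ℕ) : ℝ) + 1) • (rad m p x)⁻¹ • pdSr p H (sliceCoord m p x)) := by
  have hlap := lapF_clm_apply (mul ∘L embQ v m p) (contDiffAt_comp_sliceCoord hr hH)
  simp only [ContinuousLinearMap.comp_apply] at hlap
  rw [hlap, sum_embQ_single_pdF_comp_sliceCoord mul hr hH, lapF_comp_sliceCoord hp hr hH,
    ← map_smul, ← map_add]
  congr 1
  module

lemma T2_of_ne_zero {G : (Fin (p + 1) → ℝ) × ℝ → E} {z : (Fin (p + 1) → ℝ) × ℝ} (hz : z.2 ≠ 0)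
    (hG : ContDiffAt ℝ 2 G z) : T2 p G z = pdSr p (fun w => w.2⁻¹ • G w) z := by
  have hdiv : ContDiffAt ℝ 2 (fun w : (Fin (p + 1) → ℝ) × ℝ => w.2⁻¹ • G w) z :=
    (contDiffAt_snd.inv hz).smul hG
  rw [T2, if_neg hz, pdSr_eq_deriv (hdiv.differentiableAt two_ne_zero)]
  rfl

lemma lapSx_eq_of_snd_ne_zero {G : (Fin (p + 1) → ℝ) × ℝ → E} {z : (Fin (p + 1) → ℝ) × ℝ}
    (hz : z.2 ≠ 0) (hG : ContDiffAt ℝ 2 G z) :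
    lapSx p G z = z.2 • lapSx p (fun w => w.2⁻¹ • G w) z + (2 : ℝ) • T2 p G z := by
  have hcancel : G =ᶠ[𝓝 z] fun w => w.2 • w.2⁻¹ • G w :=
    (continuous_snd.continuousAt.eventually_ne hz).mono fun w hw => (smul_inv_smul₀ hw (G w)).symm
  rw [T2_of_ne_zero hz hG, lapSx_congr hcancel]
  exact lapSx_snd_smul ((contDiffAt_snd.inv hz).smul hG)

lemma emb_normq_mul_eq_embQ_mul (mul : E →L[ℝ] E' →L[ℝ] E'') (G : (Fin (p + 1) → ℝ) × ℝ → E')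
    (x : Fin (m + 1) → ℝ) : mul (emb v m (normq m p x)) (G (sliceCoord m p x)) =
      mul (embQ v m p x) ((sliceCoord m p x).2⁻¹ • G (sliceCoord m p x)) := by
  rw [emb_normq, map_smul, smul_apply, map_smul, sliceCoord]

lemma contDiffAt_emb_normq_mul_comp_sliceCoord (mul : E →L[ℝ] E' →L[ℝ] E'') (hr : rad m p x ≠ 0)
    {G : (Fin (p + 1) → ℝ) × ℝ → E'} (hG : ContDiffAt ℝ 2 G (sliceCoord m p x)) :
    ContDiffAt ℝ 2 (fun y => mul (emb v m (normq m p y)) (G (sliceCoord m p y))) x := by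
  simp only [emb_normq_mul_eq_embQ_mul]
  exact (mul ∘L embQ v m p).contDiff.contDiffAt.clm_apply
    (contDiffAt_comp_sliceCoord hr ((contDiffAt_snd.inv hr).smul hG))

lemma lapF_emb_normq_mul_comp_sliceCoord (hp : p ≤ m) (mul : E →L[ℝ] E' →L[ℝ] E'')
    (hr : rad m p x ≠ 0) {G : (Fin (p + 1) → ℝ) × ℝ → E'}
    (hG : ContDiffAt ℝ 2 G (sliceCoord m p x)) :
    lapF m (fun y => mul (emb v m (normq m p y)) (G (sliceCoord m p y))) x =
      mul (emb v m (normq m p x)) (lapSx p G (sliceCoord m p x) +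
        (((m - p : ℕ) : ℝ) - 1) • T2 p G (sliceCoord m p x)) := by
  have hH : ContDiffAt ℝ 2 (fun w => w.2⁻¹ • G w) (sliceCoord m p x) :=
    (contDiffAt_snd.inv hr).smul hG
  simp only [emb_normq_mul_eq_embQ_mul]
  rw [lapF_embQ_mul_comp_sliceCoord hp mul hr hH, lapSx_eq_of_snd_ne_zero hr hG,
    ← T2_of_ne_zero hr hG, emb_normq, map_smul, smul_apply, ← map_smul, smul_add, smul_add,
    show (sliceCoord m p x).2 = rad m p x from rfl, inv_smul_smul₀ hr]
  congr 1
  module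

lemma lapF_inducedFun_of_rad_ne_zero (hp : p ≤ m) (mul : E →L[ℝ] E' →L[ℝ] E'') (hr : rad m p x ≠ 0)
    {F₁ : (Fin (p + 1) → ℝ) × ℝ → E''} {F₂ : (Fin (p + 1) → ℝ) × ℝ → E'}
    (hF₁ : ContDiffAt ℝ 2 F₁ (sliceCoord m p x)) (hF₂ : ContDiffAt ℝ 2 F₂ (sliceCoord m p x)) :
    lapF m (inducedFun mul v m p F₁ F₂) x = lapSx p F₁ (sliceCoord m p x) +
      mul (emb v m (normq m p x)) (lapSx p F₂ (sliceCoord m p x)) +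
      (((m - p : ℕ) : ℝ) - 1) • (T1 p F₁ (sliceCoord m p x) +
        mul (emb v m (normq m p x)) (T2 p F₂ (sliceCoord m p x))) := by
  have hT1 : T1 p F₁ (sliceCoord m p x) = (rad m p x)⁻¹ • pdSr p F₁ (sliceCoord m p x) := if_neg hr
  unfold inducedFun
  rw [lapF_add (contDiffAt_comp_sliceCoord hr hF₁)
    (contDiffAt_emb_normq_mul_comp_sliceCoord mul hr hF₂), lapF_comp_sliceCoord hp hr hF₁,
    lapF_emb_normq_mul_comp_sliceCoord hp mul hr hF₂, hT1, map_add, map_smul]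
  module

end OffAxis

section OnAxis

variable {E E' E'' : Type*} [NormedAddCommGroup E] [NormedSpace ℝ E] [NormedAddCommGroup E']
  [NormedSpace ℝ E'] [NormedAddCommGroup E''] [NormedSpace ℝ E''] {v : ℕ → E} {m p : ℕ}
  {x : Fin (m + 1) → ℝ} {mul : E →L[ℝ] E' →L[ℝ] E''} {F₁ : (Fin (p + 1) → ℝ) × ℝ → E''}
  {F₂ : (Fin (p + 1) → ℝ) × ℝ → E'}

lemma apply_eq_zero_of_rad_eq_zero (hr : rad m p x = 0) {s : Fin (m + 1)}
    (hs : s ∈ qIndices m p) : x s = 0 := by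
  rw [← xqpart_of_mem (x := x) hs, xqpart_eq_zero hr, Pi.zero_apply]

lemma emb_normq_eq_zero (hr : rad m p x = 0) : emb v m (normq m p x) = 0 := by
  rw [emb_normq, hr, inv_zero, zero_smul]

lemma emb_normq_add_smul_single (hr : rad m p x = 0) {s : Fin (m + 1)} (hs : s ∈ qIndices m p)
    (t : ℝ) : emb v m (normq m p (x + t • Pi.single s 1)) = (|t|⁻¹ * t) • v s := by
  have hembQ : embQ v m p x = 0 := by
    rw [embQ_apply]
    exact Finset.sum_eq_zero fun k hk => by rw [apply_eq_zero_of_rad_eq_zero hr hk, zero_smul]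
  rw [emb_normq, map_add, map_smul, hembQ, embQ_single_of_mem hs, rad_add_smul_single hs, hr,
    apply_eq_zero_of_rad_eq_zero hr hs, zero_add, smul_smul]
  simp [Real.sqrt_sq_eq_abs]

lemma sliceCoord_add_smul_single_of_rad_eq_zero (hr : rad m p x = 0) {s : Fin (m + 1)}
    (hs : s ∈ qIndices m p) (t : ℝ) :
    sliceCoord m p (x + t • Pi.single s 1) = (projP m p x, |t|) := by
  rw [sliceCoord, projP_add_smul_single hs, rad_add_smul_single hs, hr,
    apply_eq_zero_of_rad_eq_zero hr hs]
  simp [Real.sqrt_sq_eq_abs]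

lemma inducedFun_add_smul_single (hr : rad m p x = 0)
    {s : Fin (m + 1)} (hs : s ∈ qIndices m p) {t : ℝ}
    (heven : F₁ (projP m p x, -t) = F₁ (projP m p x, t))
    (hodd : F₂ (projP m p x, -t) = -F₂ (projP m p x, t)) :
    inducedFun mul v m p F₁ F₂ (x + t • Pi.single s 1) =
      F₁ (projP m p x, t) + mul (v s) (F₂ (projP m p x, t)) := by
  rw [inducedFun, emb_normq_add_smul_single hr hs, sliceCoord_add_smul_single_of_rad_eq_zero hr hs]
  rcases lt_trichotomy t 0 with ht | rfl | ht
  · rw [abs_of_neg ht, heven, hodd, inv_neg, neg_mul, inv_mul_cancel₀ ht.ne, neg_one_smul]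
    simp
  · have : IsAddTorsionFree E' := .of_isTorsionFree ℝ E'
    rw [neg_zero] at hodd
    simp [self_eq_neg.1 hodd]
  · rw [abs_of_pos ht, inv_mul_cancel₀ ht.ne', one_smul]

lemma pdF_pdF_inducedFun_castLE_of_rad_eq_zero (hp : p ≤ m) (hr : rad m p x = 0)
    (hF₁ : ContDiffAt ℝ 2 F₁ (sliceCoord m p x))
    (hf : ContDiffAt ℝ 2 (inducedFun mul v m p F₁ F₂) x) (s : Fin (p + 1)) :
    pdF m (s.castLE (Nat.succ_le_succ hp)) (pdF m (s.castLE (Nat.succ_le_succ hp))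
      (inducedFun mul v m p F₁ F₂)) x =
      pdSx p s (pdSx p s F₁) (sliceCoord m p x) := by
  rw [pdF_pdF_eq_iteratedDeriv _ hf, pdSx_pdSx_eq_iteratedDeriv s hF₁]
  refine congrArg (iteratedDeriv 2 · 0) (funext fun t => ?_)
  have hsc := sliceCoord_add_smul_single_castLE hp x s t
  rw [inducedFun, emb_normq_eq_zero ((congrArg Prod.snd hsc).trans hr), map_zero, zero_apply,
    add_zero, hsc]

lemma pdF_pdF_inducedFun_of_rad_eq_zero (hr : rad m p x = 0)
    (hF₁ : ContDiffAt ℝ 2 F₁ (sliceCoord m p x)) (hF₂ : ContDiffAt ℝ 2 F₂ (sliceCoord m p x))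
    (heven : ∀ᶠ t in 𝓝 (0 : ℝ), F₁ (projP m p x, -t) = F₁ (projP m p x, t))
    (hodd : ∀ᶠ t in 𝓝 (0 : ℝ), F₂ (projP m p x, -t) = -F₂ (projP m p x, t))
    (hf : ContDiffAt ℝ 2 (inducedFun mul v m p F₁ F₂) x)
    {s : Fin (m + 1)} (hs : s ∈ qIndices m p) :
    pdF m s (pdF m s (inducedFun mul v m p F₁ F₂)) x = pdSr2 p F₁ (sliceCoord m p x) := by
  have hline : (fun t : ℝ => inducedFun mul v m p F₁ F₂ (x + t • Pi.single s 1)) =ᶠ[𝓝 0]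
      fun t => F₁ (projP m p x, t) + mul (v s) (F₂ (projP m p x, t)) := by
    filter_upwards [heven, hodd] with t hte hto using inducedFun_add_smul_single hr hs hte hto
  rw [sliceCoord, hr] at hF₁ hF₂
  have hF₁line : ContDiffAt ℝ 2 (fun t => F₁ (projP m p x, t)) 0 := contDiffAt_comp_prodMk hF₁
  have hF₂line : ContDiffAt ℝ 2 (fun t => mul (v s) (F₂ (projP m p x, t))) 0 :=
    (mul (v s)).contDiff.contDiffAt.comp 0 (contDiffAt_comp_prodMk hF₂)
  have hF₂zero : iteratedDeriv 2 (fun t => mul (v s) (F₂ (projP m p x, t))) 0 = 0 :=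
    iteratedDeriv_two_zero_of_eventually_odd (hodd.mono fun t ht => by rw [ht, map_neg])
  rw [pdF_pdF_eq_iteratedDeriv s hf, Filter.EventuallyEq.iteratedDeriv_eq 2 hline,
    iteratedDeriv_fun_add hF₁line hF₂line, hF₂zero, add_zero, sliceCoord, hr,
    pdSr2_eq_iteratedDeriv hF₁]

lemma lapF_inducedFun_of_rad_eq_zero (hp : p ≤ m) (hr : rad m p x = 0)
    (hF₁ : ContDiffAt ℝ 2 F₁ (sliceCoord m p x)) (hF₂ : ContDiffAt ℝ 2 F₂ (sliceCoord m p x))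
    (heven : ∀ᶠ t in 𝓝 (0 : ℝ), F₁ (projP m p x, -t) = F₁ (projP m p x, t))
    (hodd : ∀ᶠ t in 𝓝 (0 : ℝ), F₂ (projP m p x, -t) = -F₂ (projP m p x, t))
    (hf : ContDiffAt ℝ 2 (inducedFun mul v m p F₁ F₂) x) :
    lapF m (inducedFun mul v m p F₁ F₂) x = lapSx p F₁ (sliceCoord m p x) +
      mul (emb v m (normq m p x)) (lapSx p F₂ (sliceCoord m p x)) +
      (((m - p : ℕ) : ℝ) - 1) • (T1 p F₁ (sliceCoord m p x) +
        mul (emb v m (normq m p x)) (T2 p F₂ (sliceCoord m p x))) := by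
  have hT1 : T1 p F₁ (sliceCoord m p x) = pdSr2 p F₁ (sliceCoord m p x) := if_pos hr
  simp only [emb_normq_eq_zero hr, map_zero, zero_apply, add_zero, hT1]
  rw [lapF, sum_univ_eq_sum_castLE_add_sum_qIndices hp, lapSx,
    Finset.sum_congr rfl fun s _ => pdF_pdF_inducedFun_castLE_of_rad_eq_zero hp hr hF₁ hf s,
    Finset.sum_congr rfl fun s hs =>
      pdF_pdF_inducedFun_of_rad_eq_zero hr hF₁ hF₂ heven hodd hf hs,
    Finset.sum_const, card_qIndices, ← Nat.cast_smul_eq_nsmul ℝ]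
  module

end OnAxis

section CliffordFamily

/-- The elements `v s`, `s ∈ S`, square to `-1` and anticommute pairwise, like the generators of a
Clifford algebra. These relations turn the equation `x_q² = -1` into `|x_q| = 1`. -/
structure IsCliffordFamily {ι R : Type*} [Mul R] [One R] [Neg R] (v : ι → R) (S : Finset ι) :
    Prop where
  mul_self : ∀ s ∈ S, v s * v s = -1
  anticomm : ∀ s ∈ S, ∀ t ∈ S, s ≠ t → v s * v t = -(v t * v s)

variable {ι : Type*} {S T : Finset ι} {v : ι → A} {mul : A →L[ℝ] A →L[ℝ] A}

lemma IsCliffordFamily.mono {R : Type*} [Mul R] [One R] [Neg R] {v : ι → R}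
    (hv : IsCliffordFamily v S) (hTS : T ⊆ S) : IsCliffordFamily v T :=
  ⟨fun s hs => hv.mul_self s (hTS hs), fun s hs t ht => hv.anticomm s (hTS hs) t (hTS ht)⟩

lemma IsCliffordFamily.sum_smul_mul_self (hmul : ∀ a b, mul a b = a * b)
    (hv : IsCliffordFamily v S) (c : ι → ℝ) :
    (∑ s ∈ S, c s • v s) * (∑ s ∈ S, c s • v s) = -((∑ s ∈ S, c s ^ 2) • (1 : A)) := by
  classical
  induction S using Finset.induction_on with
  | empty => simp [← hmul]
  | insert a T ha ih =>
    have hanti : mul (∑ s ∈ T, c s • v s) (v a) = -mul (v a) (∑ s ∈ T, c s • v s) := by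
      rw [map_sum, map_sum, sum_apply, ← Finset.sum_neg_distrib]
      refine Finset.sum_congr rfl fun s hs => ?_
      rw [map_smul, map_smul, smul_apply, hmul, hmul,
        hv.anticomm s (Finset.mem_insert_of_mem hs) a (Finset.mem_insert_self a T)
          (ne_of_mem_of_not_mem hs ha), smul_neg]
    have hself : mul (v a) (v a) = -1 := by rw [hmul, hv.mul_self a (Finset.mem_insert_self a T)]
    have hT : mul (∑ s ∈ T, c s • v s) (∑ s ∈ T, c s • v s) = -((∑ s ∈ T, c s ^ 2) • (1 : A)) := by
      rw [hmul, ih (hv.mono (Finset.subset_insert a T))]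
    simp only [← hmul, Finset.sum_insert ha, map_add, map_smul, add_apply, smul_apply, hself, hanti,
      hT]
    module

end CliffordFamily

section Sphere

variable {v : ℕ → A} {m p : ℕ} {mul : A →L[ℝ] A →L[ℝ] A}

lemma mem_Sph_iff (hmul : ∀ a b, mul a b = a * b) (h1 : (1 : A) ≠ 0)
    (hv : IsCliffordFamily (fun s : Fin (m + 1) => v s) (qIndices m p)) {w : Fin (m + 1) → ℝ} :
    w ∈ Sph v m p ↔ (∀ s ∉ qIndices m p, w s = 0) ∧ ∑ s ∈ qIndices m p, w s ^ 2 = 1 := by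
  simp only [Sph, Set.mem_ofPred_eq, mem_qIndices, not_lt]
  refine and_congr_right fun hw => ?_
  rw [emb_eq_sum_qIndices (p := p) fun s hs => hw s (not_lt.1 (mt mem_qIndices.2 hs)),
    hv.sum_smul_mul_self hmul, neg_inj]
  refine ⟨fun h => smul_left_injective ℝ h1 (by simpa using h), fun h => by rw [h, one_smul]⟩

lemma single_mem_Sph (hmul : ∀ a b, mul a b = a * b) (h1 : (1 : A) ≠ 0)
    (hv : IsCliffordFamily (fun s : Fin (m + 1) => v s) (qIndices m p)) {s : Fin (m + 1)}
    (hs : s ∈ qIndices m p) : Pi.single s 1 ∈ Sph v m p := by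
  refine (mem_Sph_iff hmul h1 hv).2 ⟨fun t ht => Pi.single_eq_of_ne (by grind) _, ?_⟩
  rw [Finset.sum_eq_single_of_mem s hs fun t _ hts => by simp [hts]]
  simp

lemma normq_mem_Sph (hmul : ∀ a b, mul a b = a * b) (h1 : (1 : A) ≠ 0)
    (hv : IsCliffordFamily (fun s : Fin (m + 1) => v s) (qIndices m p)) {x : Fin (m + 1) → ℝ}
    (hr : rad m p x ≠ 0) : normq m p x ∈ Sph v m p := by
  refine (mem_Sph_iff hmul h1 hv).2 ⟨fun s hs => by simp [normq, xqpart_of_notMem hs], ?_⟩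
  rw [Finset.sum_congr rfl fun s hs => by rw [normq, Pi.smul_apply, xqpart_of_mem hs, smul_eq_mul,
    mul_pow], ← Finset.mul_sum, ← rad_sq, ← mul_pow, inv_mul_cancel₀ hr, one_pow]

lemma pt_normq {x : Fin (m + 1) → ℝ} (hr : rad m p x ≠ 0) :
    pt m p (normq m p x) (projP m p x) (rad m p x) = x := by
  rw [pt, normq, smul_inv_smul₀ hr, injP_projP_add_xqpart]

lemma pt_of_rad_eq_zero {x : Fin (m + 1) → ℝ} (hr : rad m p x = 0) (w : Fin (m + 1) → ℝ) (r : ℝ) :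
    pt m p w (projP m p x) r = x + r • w := by
  conv_rhs => rw [← injP_projP_add_xqpart (p := p) x, xqpart_eq_zero hr, add_zero]
  rw [pt]

lemma sliceCoord_pt (hp : p ≤ m) (hmul : ∀ a b, mul a b = a * b) (h1 : (1 : A) ≠ 0)
    (hv : IsCliffordFamily (fun s : Fin (m + 1) => v s) (qIndices m p)) {w : Fin (m + 1) → ℝ}
    (hw : w ∈ Sph v m p) (y : Fin (p + 1) → ℝ) (r : ℝ) :
    sliceCoord m p (pt m p w y r) = (y, |r|) := by
  obtain ⟨hw0, hw1⟩ := (mem_Sph_iff hmul h1 hv).1 hw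
  refine Prod.ext (funext fun s => ?_) ?_
  · have hs : (s : ℕ) < m + 1 := by omega
    have hs' : ⟨s, hs⟩ ∉ qIndices m p := by simpa [mem_qIndices] using s.is_le
    simp [sliceCoord, projP, pt, injP, hs, hw0 _ hs', s.is_le.not_gt]
  · have hsq : ∑ s ∈ qIndices m p, pt m p w y r s ^ 2 = r ^ 2 := by
      rw [← mul_one (r ^ 2), ← hw1, Finset.mul_sum]
      refine Finset.sum_congr rfl fun s hs => ?_
      have hs' : ¬(s : ℕ) < p + 1 := by have := mem_qIndices.1 hs; omega
      simp [pt, injP, hs', mul_pow]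
    rw [sliceCoord, rad_eq_sqrt, hsq, Real.sqrt_sq_eq_abs]

lemma sliceCoord_mem (hp : p ≤ m) (hmul : ∀ a b, mul a b = a * b) (h1 : (1 : A) ≠ 0)
    (hv : IsCliffordFamily (fun s : Fin (m + 1) => v s) (qIndices m p))
    {D : Set ((Fin (p + 1) → ℝ) × ℝ)} (hD : ∀ z ∈ D, reflD p z ∈ D) {x : Fin (m + 1) → ℝ}
    (hx : x ∈ OmegaD v m p D) : sliceCoord m p x ∈ D := by
  obtain ⟨w, hw, z, hz, rfl⟩ := hx
  rw [sliceCoord_pt hp hmul h1 hv hw]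
  rcases abs_choice z.2 with h | h <;> rw [h]
  exacts [hz, hD z hz]

lemma mem_OmegaD_iff (hp : p < m) (hmul : ∀ a b, mul a b = a * b) (h1 : (1 : A) ≠ 0)
    (hv : IsCliffordFamily (fun s : Fin (m + 1) => v s) (qIndices m p))
    {D : Set ((Fin (p + 1) → ℝ) × ℝ)} (hD : ∀ z ∈ D, reflD p z ∈ D) {x : Fin (m + 1) → ℝ} :
    x ∈ OmegaD v m p D ↔ sliceCoord m p x ∈ D := by
  refine ⟨sliceCoord_mem hp.le hmul h1 hv hD, fun hx => ?_⟩
  by_cases hr : rad m p x = 0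
  · have hlast : Fin.last m ∈ qIndices m p := mem_qIndices.2 (by simpa)
    refine ⟨_, single_mem_Sph hmul h1 hv hlast, _, hx, ?_⟩
    simp only [sliceCoord, hr, pt_of_rad_eq_zero hr, zero_smul, add_zero]
  · exact ⟨_, normq_mem_Sph hmul h1 hv hr, _, hx, (pt_normq hr).symm⟩

lemma isOpen_OmegaD (hp : p < m) (hmul : ∀ a b, mul a b = a * b) (h1 : (1 : A) ≠ 0)
    (hv : IsCliffordFamily (fun s : Fin (m + 1) => v s) (qIndices m p))
    {D : Set ((Fin (p + 1) → ℝ) × ℝ)} (hDo : IsOpen D) (hD : ∀ z ∈ D, reflD p z ∈ D) :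
    IsOpen (OmegaD v m p D) := by
  have hpre : OmegaD v m p D = sliceCoord m p ⁻¹' D :=
    Set.ext fun _ => mem_OmegaD_iff hp hmul h1 hv hD
  exact hpre ▸ hDo.preimage (continuous_sliceCoord m p)

end Sphere

section StemFunctions

variable {E : Type*} [NormedAddCommGroup E] {p : ℕ} {D : Set ((Fin (p + 1) → ℝ) × ℝ)}
  {F₁ F₂ : (Fin (p + 1) → ℝ) × ℝ → E} {y : Fin (p + 1) → ℝ}

lemma eventually_prodMk_mem (hD : IsOpen D) (hy : (y, (0 : ℝ)) ∈ D) :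
    ∀ᶠ t in 𝓝 (0 : ℝ), (y, t) ∈ D :=
  (Continuous.prodMk_right y).continuousAt.eventually (hD.mem_nhds hy)

lemma IsStem.eventually_even (hD : IsOpen D) (hstem : IsStem p D F₁ F₂) (hy : (y, (0 : ℝ)) ∈ D) :
    ∀ᶠ t in 𝓝 (0 : ℝ), F₁ (y, -t) = F₁ (y, t) :=
  (eventually_prodMk_mem hD hy).mono fun t ht => (hstem (y, t) ht).1

lemma IsStem.eventually_odd (hD : IsOpen D) (hstem : IsStem p D F₁ F₂) (hy : (y, (0 : ℝ)) ∈ D) :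
    ∀ᶠ t in 𝓝 (0 : ℝ), F₂ (y, -t) = -F₂ (y, t) :=
  (eventually_prodMk_mem hD hy).mono fun t ht => (hstem (y, t) ht).2

variable [NormedSpace ℝ E]

lemma IsStem.snd_eq_zero (hstem : IsStem p D F₁ F₂) (hy : (y, (0 : ℝ)) ∈ D) : F₂ (y, 0) = 0 := by
  have : IsAddTorsionFree E := .of_isTorsionFree ℝ E
  simpa [reflD, self_eq_neg] using (hstem _ hy).2

lemma IsStem.tendsto_inv_smul_pdSr (hD : IsOpen D) (hstem : IsStem p D F₁ F₂)
    (hF₁ : ContDiffOn ℝ 2 F₁ D) (hy : (y, (0 : ℝ)) ∈ D) :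
    Tendsto (fun r : ℝ => r⁻¹ • pdSr p F₁ (y, r)) (𝓝[≠] 0) (𝓝 (pdSr2 p F₁ (y, 0))) := by
  have hC2 : ContDiffAt ℝ 2 F₁ (y, 0) := hF₁.contDiffAt (hD.mem_nhds hy)
  rw [pdSr2_eq_iteratedDeriv hC2]
  refine (tendsto_inv_smul_deriv_of_eventually_even (contDiffAt_comp_prodMk hC2)
    (hstem.eventually_even hD hy)).congr' (nhdsWithin_le_nhds ?_)
  filter_upwards [eventually_prodMk_mem hD hy] with r hr
  rw [pdSr_eq_deriv ((hF₁.contDiffAt (hD.mem_nhds hr)).differentiableAt two_ne_zero)]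

lemma IsStem.tendsto_fderiv_inv_smul (hD : IsOpen D) (hstem : IsStem p D F₁ F₂)
    (hF₂ : ContDiffOn ℝ 2 F₂ D) (hy : (y, (0 : ℝ)) ∈ D) :
    Tendsto (fun r : ℝ => fderiv ℝ (fun t : ℝ => t⁻¹ • F₂ (y, t)) r 1) (𝓝[≠] 0)
      (𝓝 ((2 : ℝ)⁻¹ • pdSr2 p F₂ (y, 0))) := by
  have hC2 : ContDiffAt ℝ 2 F₂ (y, 0) := hF₂.contDiffAt (hD.mem_nhds hy)
  rw [pdSr2_eq_iteratedDeriv hC2]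
  exact tendsto_deriv_inv_smul (contDiffAt_comp_prodMk hC2) (hstem.snd_eq_zero hy)

end StemFunctions

section SliceFunctions

variable {v : ℕ → A} {m p : ℕ} {mul : A →L[ℝ] A →L[ℝ] A} {D : Set ((Fin (p + 1) → ℝ) × ℝ)}
  {F₁ F₂ : (Fin (p + 1) → ℝ) × ℝ → A} {f : (Fin (m + 1) → ℝ) → A}

lemma Induced.eqOn_inducedFun (hp : p < m) (hmul : ∀ a b, mul a b = a * b) (h1 : (1 : A) ≠ 0)
    (hv : IsCliffordFamily (fun s : Fin (m + 1) => v s) (qIndices m p))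
    (hDrefl : ∀ z ∈ D, reflD p z ∈ D) (hstem : IsStem p D F₁ F₂)
    (hind : Induced v m p D F₁ F₂ f) :
    Set.EqOn f (inducedFun mul v m p F₁ F₂) (OmegaD v m p D) := by
  intro x hx
  have hz : sliceCoord m p x ∈ D := sliceCoord_mem hp.le hmul h1 hv hDrefl hx
  by_cases hr : rad m p x = 0
  · have hlast : Fin.last m ∈ qIndices m p := mem_qIndices.2 (by simpa)
    have hzero : F₂ (sliceCoord m p x) = 0 := by
      rw [sliceCoord, hr] at hz ⊢
      exact hstem.snd_eq_zero hz
    have hfx := hind _ (single_mem_Sph hmul h1 hv hlast) _ hz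
    rw [← hmul, hzero, map_zero] at hfx
    rw [inducedFun, hzero, map_zero, ← hfx, sliceCoord, hr, pt_of_rad_eq_zero hr, zero_smul,
      add_zero]
  · have hfx := hind _ (normq_mem_Sph hmul h1 hv hr) _ hz
    rw [inducedFun, hmul, ← hfx, sliceCoord, pt_normq hr]

theorem laplacian_of_slice_function_general (mul : A →L[ℝ] A →L[ℝ] A)
    (hmul : ∀ a b, mul a b = a * b) (h1 : (1 : A) ≠ 0) (v : ℕ → A) (m p : ℕ)
    (hv : IsCliffordFamily (fun s : Fin (m + 1) => v s) (qIndices m p)) (hp : p < m)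
    (D : Set ((Fin (p + 1) → ℝ) × ℝ)) (hD : IsOpen D) (hDrefl : ∀ z ∈ D, reflD p z ∈ D)
    (F₁ F₂ : (Fin (p + 1) → ℝ) × ℝ → A) (hstem : IsStem p D F₁ F₂)
    (hF₁ : ContDiffOn ℝ 2 F₁ D) (hF₂ : ContDiffOn ℝ 2 F₂ D)
    (f : (Fin (m + 1) → ℝ) → A) (hind : Induced v m p D F₁ F₂ f)
    (hf : ContDiffOn ℝ 2 f (OmegaD v m p D)) :
    (∀ y : Fin (p + 1) → ℝ, (y, (0 : ℝ)) ∈ D →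
      Tendsto (fun r : ℝ => r⁻¹ • pdSr p F₁ (y, r)) (𝓝[≠] 0) (𝓝 (pdSr2 p F₁ (y, 0))) ∧
      Tendsto (fun r : ℝ => fderiv ℝ (fun t : ℝ => t⁻¹ • F₂ (y, t)) r 1) (𝓝[≠] 0)
        (𝓝 ((2 : ℝ)⁻¹ • pdSr2 p F₂ (y, 0)))) ∧
    ∀ x ∈ OmegaD v m p D,
      lapF m f x =
        lapSx p F₁ (projP m p x, rad m p x) +
        emb v m (normq m p x) * lapSx p F₂ (projP m p x, rad m p x) +
        (((m - p : ℕ) : ℝ) - 1) •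
          (T1 p F₁ (projP m p x, rad m p x) +
            emb v m (normq m p x) * T2 p F₂ (projP m p x, rad m p x)) := by
  refine ⟨fun y hy => ⟨hstem.tendsto_inv_smul_pdSr hD hF₁ hy,
    hstem.tendsto_fderiv_inv_smul hD hF₂ hy⟩, fun x hx => ?_⟩
  have hΩ : OmegaD v m p D ∈ 𝓝 x := (isOpen_OmegaD hp hmul h1 hv hD hDrefl).mem_nhds hx
  have hfI : f =ᶠ[𝓝 x] inducedFun mul v m p F₁ F₂ :=
    (hind.eqOn_inducedFun hp hmul h1 hv hDrefl hstem).eventuallyEq_of_mem hΩ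
  have hz : sliceCoord m p x ∈ D := sliceCoord_mem hp.le hmul h1 hv hDrefl hx
  have hF₁z : ContDiffAt ℝ 2 F₁ (sliceCoord m p x) := hF₁.contDiffAt (hD.mem_nhds hz)
  have hF₂z : ContDiffAt ℝ 2 F₂ (sliceCoord m p x) := hF₂.contDiffAt (hD.mem_nhds hz)
  rw [lapF_congr hfI, ← hmul, ← hmul]
  by_cases hr : rad m p x = 0
  · have hy : (projP m p x, (0 : ℝ)) ∈ D := hr ▸ hz
    exact lapF_inducedFun_of_rad_eq_zero hp.le hr hF₁z hF₂z (hstem.eventually_even hD hy)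
      (hstem.eventually_odd hD hy) ((hf.contDiffAt hΩ).congr_of_eventuallyEq hfI.symm)
  · exact lapF_inducedFun_of_rad_ne_zero hp.le mul hr hF₁z hF₂z

lemma IsAltStarAlg.exists_mul {conj : A → A} (H : IsAltStarAlg A conj) :
    ∃ mul : A →L[ℝ] A →L[ℝ] A, ∀ a b, mul a b = a * b :=
  haveI := H.finDim
  ⟨(LinearMap.mk₂ ℝ (· * ·) H.add_mul' H.smul_mul' H.mul_add' H.mul_smul').toContinuousBilinearMap,
    fun _ _ => rfl⟩

lemma IsHypBasis.one_ne_zero {conj : A → A} (hv : IsHypBasis A conj v m) : (1 : A) ≠ 0 := by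
  simpa [hv.v_zero] using hv.indep.ne_zero 0

lemma IsHypBasis.isCliffordFamily {conj : A → A} (H : IsAltStarAlg A conj)
    (hv : IsHypBasis A conj v m) :
    IsCliffordFamily (fun s : Fin (m + 1) => v s) (qIndices m p) where
  mul_self s hs := by
    have hs1 : 1 ≤ (s : ℕ) := Nat.one_le_of_lt (mem_qIndices.1 hs)
    have hconj : conj (v s) = (-1 : ℝ) • v s := by
      rw [neg_one_smul, eq_neg_of_add_eq_zero_right (hv.trace_zero s hs1 s.is_le)]
    rw [← hv.norm_one s hs1 s.is_le, hconj, H.mul_smul', neg_one_smul, neg_neg]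
  anticomm s hs t ht hst :=
    hv.anticomm s t (Nat.one_le_of_lt (mem_qIndices.1 hs)) s.is_le
      (Nat.one_le_of_lt (mem_qIndices.1 ht)) t.is_le (Fin.val_ne_of_ne hst)

end SliceFunctions

/-- For `f = F₁ + ωF₂ ∈ GS²(Ω_D) ∩ C²(Ω_D, 𝔸)`:
`Δ_x f = Δ_{x'}F₁ + ω Δ_{x'}F₂ + (q-1)((1/r)∂_r F₁ + ω ∂_r(F₂/r))`,
where at `r = 0` the quantities `(1/r)∂_r F₁` and `∂_r(F₂/r)` are the limits as
`r → 0`, which exist and equal `∂_r²F₁(x_p,0)` and `(1/2)∂_r²F₂(x_p,0)`. -/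
theorem laplacian_of_slice_function
    {A : Type*} [NormedAddCommGroup A] [NormedSpace ℝ A] [Mul A] [One A]
    (conj : A → A) (H : IsAltStarAlg A conj)
    (v : ℕ → A) (m p : ℕ) (hv : IsHypBasis A conj v m) (hp : p < m)
    (D : Set ((Fin (p + 1) → ℝ) × ℝ)) (hD : IsOpen D)
    (hDrefl : ∀ z ∈ D, reflD p z ∈ D)
    (F₁ F₂ : (Fin (p + 1) → ℝ) × ℝ → A) (hstem : IsStem p D F₁ F₂)
    (hF₁ : ContDiffOn ℝ 2 F₁ D) (hF₂ : ContDiffOn ℝ 2 F₂ D)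
    (f : (Fin (m + 1) → ℝ) → A) (hind : Induced v m p D F₁ F₂ f)
    (hf : ContDiffOn ℝ 2 f (OmegaD v m p D)) :
    -- the limits defining `(1/r)∂_r F₁` and `∂_r(F₂/r)` at `r = 0` exist and have
    -- the stated values:
    (∀ y : Fin (p + 1) → ℝ, (y, (0 : ℝ)) ∈ D →
      Filter.Tendsto (fun r : ℝ => r⁻¹ • pdSr p F₁ (y, r)) (nhdsWithin 0 {(0 : ℝ)}ᶜ)
        (nhds (pdSr2 p F₁ (y, 0))) ∧
      Filter.Tendsto (fun r : ℝ => fderiv ℝ (fun t : ℝ => t⁻¹ • F₂ (y, t)) r 1)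
        (nhdsWithin 0 {(0 : ℝ)}ᶜ)
        (nhds ((2 : ℝ)⁻¹ • pdSr2 p F₂ (y, 0)))) ∧
    -- the formula for the Laplacian, valid on all of `Ω_D`:
    (∀ x ∈ OmegaD v m p D,
      lapF m f x =
        lapSx p F₁ (projP m p x, rad m p x) +
        emb v m (normq m p x) * lapSx p F₂ (projP m p x, rad m p x) +
        (((m - p : ℕ) : ℝ) - 1) •
          (T1 p F₁ (projP m p x, rad m p x) +
            emb v m (normq m p x) * T2 p F₂ (projP m p x, rad m p x))) := by
  obtain ⟨mul, hmul⟩ := H.exists_mul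
  exact laplacian_of_slice_function_general mul hmul hv.one_ne_zero v m p (hv.isCliffordFamily H)
    hp D hD hDrefl F₁ F₂ hstem hF₁ hF₂ f hind hf

end GPSM
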